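/- arXiv:math/0404262 — 2 statements merged into one kernel-verified Lean document; each statement's English description precedes it below -/
import Mathlib

section
/- Let $F_k$ be the free associative algebra over a field of characteristic zero with generators $y_1,\dots,y_k$, and $\mathfrak{f}_k \subset F_k$ the free Lie algebra on the same generators, so that $F_k = U(\mathfrak{f}_k)$. Let $p_k : F_k \to \mathfrak{f}_k$ be the composition of the inverse of the symmetrization isomorphism $S(\mathfrak{f}_k) \to F_k$ with the projection onto $S^1(\mathfrak{f}_k) = \mathfrak{f}_k$. Then $p_k(y_1 \cdots y_k) = \mathrm{CBH}_k(y_1,\dots,y_k)$, the multilinear part in $y_1,\dots,y_k$ of $\log(e^{y_1}\cdots e^{y_k})$. -/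
/-!
Common setup: a concrete model of the degree completion `F̂ₙ` of the free
associative algebra on `n` generators `x₁, …, xₙ` over a field `K` of
characteristic zero, as the space of formal (possibly infinite) `K`-linear
combinations of words in the letters `x₁, …, xₙ`, i.e. functions
`List (Fin n) → K` (the value at a word is its coefficient).  The product is
the (well-defined) convolution/concatenation product.  The free associative
algebra `Fₙ` sits inside as the finitely supported functions; the word `w`
corresponds to `delta w`, and `xᵢ = delta [i]`.
-/

noncomputable section

open Finset

namespace CBHPaper

/-- The degree completion `F̂ₙ` of the free associative algebra on `n`
generators over `K`: formal series of words, i.e. functions assigning to every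
word (a list over `Fin n`) its coefficient.  Addition and scalar
multiplication are pointwise (the `Pi` module structure). -/
abbrev Fhat (K : Type) (n : ℕ) : Type := List (Fin n) → K

variable {K : Type} [Field K] [CharZero K] {n : ℕ}

/-- The unit `1` of `F̂ₙ` (the empty word). -/
def oneF : Fhat K n := fun w => if w = [] then 1 else 0

/-- The word `w₀` (a product of generators), viewed as an element of `F̂ₙ`.
In particular `delta [i]` is the generator `xᵢ`. -/
def delta (w₀ : List (Fin n)) : Fhat K n := fun w => if w = w₀ then 1 else 0

/-- The (concatenation) product of `F̂ₙ`: the coefficient of a word `w` in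
`f * g` is the sum over all ways of splitting `w` as a concatenation `u ++ v`
of `f u * g v`. -/
def mulF (f g : Fhat K n) : Fhat K n :=
  fun w => ∑ i ∈ Finset.range (w.length + 1), f (w.take i) * g (w.drop i)

/-- Powers in `F̂ₙ`. -/
def powF (f : Fhat K n) : ℕ → Fhat K n
  | 0 => oneF
  | k + 1 => mulF f (powF f k)

/-- Ordered product of a finite list of elements of `F̂ₙ`. -/
def prodListF : List (Fhat K n) → Fhat K n
  | [] => oneF
  | f :: l => mulF f (prodListF l)

/-- The exponential series `exp f = ∑ₖ fᵏ/k!`; it is the genuine exponential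
when `f` has vanishing constant term (then the sum defining each coefficient
is finite, as accounted for by the truncation below). -/
def expF (f : Fhat K n) : Fhat K n :=
  fun w => ∑ k ∈ Finset.range (w.length + 1), (Nat.factorial k : K)⁻¹ * powF f k w

/-- The logarithm series `log X = ∑_{k ≥ 1} (-1)^{k+1} (X-1)ᵏ / k`; it is the
genuine logarithm (the inverse of `expF`) when `X` has constant term `1`. -/
def logF (X : Fhat K n) : Fhat K n :=
  fun w => ∑ k ∈ Finset.Icc 1 w.length,
    (-1 : K) ^ (k + 1) * (k : K)⁻¹ * powF (X - oneF) k w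

/-- `shuf w u v` is the number of ways of splitting the word `w` into a
subword equal to `u` and a complementary subword equal to `v`; these are the
structure constants of the coproduct `Δ` of `F̂ₙ` for which the generators are
primitive:  `Δ(w) = ∑_{S ⊆ positions of w} w|_S ⊗ w|_{Sᶜ}`. -/
def shuf : List (Fin n) → List (Fin n) → List (Fin n) → ℕ
  | [], u, v => if u = [] ∧ v = [] then 1 else 0
  | a :: w, u, v =>
      (match u with
        | b :: u' => if b = a then shuf w u' v else 0
        | [] => 0) +
      (match v with
        | b :: v' => if b = a then shuf w u v' else 0
        | [] => 0)

/-- The completed coproduct of `F̂ₙ` (for which the generators `xᵢ` are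
primitive), expressed coefficientwise: `coprodF X u v` is the coefficient of
`u ⊗ v` in `Δ(X)`.  Only words of length `|u| + |v|` contribute. -/
def coprodF (X : Fhat K n) (u v : List (Fin n)) : K :=
  ∑ c : Fin (u.length + v.length) → Fin n,
    (shuf (List.ofFn c) u v : K) * X (List.ofFn c)

/-- `X ∈ F̂ₙ` is group-like if `X = 1 + (higher degree)` and `Δ(X) = X ⊗ X`. -/
def IsGroupLike (X : Fhat K n) : Prop :=
  X [] = 1 ∧ ∀ u v, coprodF X u v = X u * X v

/-- The free Lie algebra `fₙ ⊆ Fₙ ⊆ F̂ₙ`: the smallest subspace containing the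
generators `xᵢ` and closed under the commutator bracket `[f,g] = fg - gf`. -/
inductive IsLieElem : Fhat K n → Prop
  | gen (i : Fin n) : IsLieElem (delta [i])
  | zero : IsLieElem 0
  | add {f g : Fhat K n} : IsLieElem f → IsLieElem g → IsLieElem (f + g)
  | smul (c : K) {f : Fhat K n} : IsLieElem f → IsLieElem (c • f)
  | lieBracket {f g : Fhat K n} : IsLieElem f → IsLieElem g →
      IsLieElem (mulF f g - mulF g f)

/-- The homogeneous component of degree `k` of an element of `F̂ₙ`. -/
def trunc (k : ℕ) (f : Fhat K n) : Fhat K n := fun w => if w.length = k then f w else 0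

/-- The completed free Lie algebra `f̂ₙ ⊆ F̂ₙ` (degree completion of `fₙ`):
every homogeneous component is a Lie element. -/
def IsLieElemHat (f : Fhat K n) : Prop := ∀ k, IsLieElem (trunc k f)

/-- `CBHₖ(x₁, …, xₖ)`: the multilinear part (the component of multidegree
`(1,…,1)`, i.e. the part supported on words of length `k` with pairwise
distinct letters) of `log (e^{x₁} ⋯ e^{xₖ})`, an element of `fₖ ⊆ F̂ₖ`. -/
def CBHuniv (K : Type) [Field K] [CharZero K] (k : ℕ) : Fhat K k :=
  fun w =>
    if w.length = k ∧ w.Nodup then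
      logF (prodListF (List.ofFn fun i : Fin k => expF (delta [i]))) w
    else 0

/-- The pushforward (substitution `yⱼ ↦ x_{φ(j)}`) along a map of generators
`φ : Fin k → Fin n`; it is the continuous algebra morphism `F̂ₖ → F̂ₙ` induced
by `φ`. -/
def pushF {k : ℕ} (φ : Fin k → Fin n) (f : Fhat K k) : Fhat K n :=
  fun v => ∑ u : Fin v.length → Fin k,
    if (List.ofFn u).map φ = v then f (List.ofFn u) else 0

/-- `CBH_k(x_{i₁}, …, x_{i_k})` for a word `w = (i₁, …, i_k)` over `Fin n`:
the image of the universal `CBHuniv k` under the substitution `yⱼ ↦ x_{iⱼ}`.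
This is `cbhₙ(x_{i₁} ⋯ x_{i_k})`. -/
def CBHword (w : List (Fin n)) : Fhat K n :=
  pushF w.get (CBHuniv K w.length)

/-- The completion `ĉbhₙ : F̂ₙ → f̂ₙ ⊆ F̂ₙ` of the linear map `cbhₙ` sending
the word `x_{i₁} ⋯ x_{i_k}` to `CBHₖ(x_{i₁}, …, x_{i_k})`:  writing
`X = ∑_w X(w)·w`, `ĉbhₙ(X) = ∑_w X(w)·CBHword w` (for each coefficient this
is a finite sum, since `CBHword w` is homogeneous of degree `|w|`). -/
def cbhHat (X : Fhat K n) : Fhat K n :=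
  fun v => ∑ c : Fin v.length → Fin n, X (List.ofFn c) * CBHword (List.ofFn c) v

/-- The symmetrized product `sym(z₁ ⊙ ⋯ ⊙ z_k) = (1/k!) ∑_σ z_{σ(1)} ⋯ z_{σ(k)}`.
As the `zᵢ` range over (completed) Lie elements, these elements span the image
of `Sᵏ` under the symmetrization map. -/
def symProd {k : ℕ} (z : Fin k → Fhat K n) : Fhat K n :=
  (Nat.factorial k : K)⁻¹ • ∑ σ : Equiv.Perm (Fin k), prodListF (List.ofFn (z ∘ σ))

end CBHPaper

namespace CBHPaper

attribute [local instance] LieRing.ofAssociativeRing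

section Span

variable {K A : Type*} [Field K] [Ring A] [Algebra K A]

/-- If a vector-valued polynomial takes values in a subspace at all natural numbers, then its
coefficients lie in that subspace. -/
theorem coeff_mem_of_forall_natCast [CharZero K] {V : Type*} [AddCommGroup V] [Module K V]
    (W : Submodule K V) (N : ℕ) (c : ℕ → V)
    (h : ∀ t : ℕ, ∑ i ∈ range N, (t : K) ^ i • c i ∈ W) {i : ℕ} (hi : i < N) : c i ∈ W := by
  by_contra hc
  obtain ⟨f, hf, hW⟩ := Submodule.exists_le_ker_of_notMem hc
  let P : Polynomial K := ∑ j ∈ range N, Polynomial.C (f (c j)) * Polynomial.X ^ j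
  have hP : P = 0 := by
    apply Polynomial.eq_zero_of_infinite_isRoot
    refine (Set.infinite_range_of_injective (Nat.cast_injective (R := K))).mono ?_
    rintro _ ⟨t, rfl⟩
    have ht := hW (h t)
    simp only [LinearMap.mem_ker, map_sum, map_smul, smul_eq_mul] at ht
    simpa [P, Polynomial.eval_finsetSum, mul_comm (f _)] using ht
  apply hf
  have := congrArg (fun Q => Polynomial.coeff Q i) hP
  simpa [P, Polynomial.finsetSum_coeff, Polynomial.coeff_C_mul, Polynomial.coeff_X_pow, hi]
    using this

/-- The derivative of `x ↦ x ^ n` at `z` in the direction `u`. -/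
def powDeriv (z u : A) : ℕ → A
  | 0 => 0
  | n + 1 => u * z ^ n + z * powDeriv z u n

theorem coeff_one_C_add_pow (z u : A) (n : ℕ) :
    ((Polynomial.C z + Polynomial.C u * Polynomial.X) ^ n).coeff 0 = z ^ n ∧
    ((Polynomial.C z + Polynomial.C u * Polynomial.X) ^ n).coeff 1 = powDeriv z u n := by
  induction n with
  | zero => simp [powDeriv, Polynomial.coeff_one]
  | succ n ih =>
    rw [pow_succ', add_mul, mul_assoc]
    simp only [Polynomial.coeff_add, Polynomial.coeff_C_mul, ih.1, ih.2,
      Polynomial.coeff_X_mul_zero, mul_zero, add_zero, ← pow_succ', true_and]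
    rw [show (1 : ℕ) = 0 + 1 from rfl, Polynomial.coeff_X_mul, ih.1, powDeriv, add_comm]

theorem powDeriv_mem [CharZero K] (W : Submodule K A) (z u : A) (n : ℕ)
    (h : ∀ t : K, (z + t • u) ^ n ∈ W) : powDeriv z u n ∈ W := by
  let P : Polynomial A := (Polynomial.C z + Polynomial.C u * Polynomial.X) ^ n
  have key : ∀ t : ℕ, ∑ i ∈ range (P.natDegree + 2), (t : K) ^ i • P.coeff i ∈ W := by
    intro t
    let φ := Polynomial.eval₂RingHom' (RingHom.id A) (algebraMap K A t)
      (fun a => (Algebra.commutes _ a).symm)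
    have hφ : φ P = (z + (t : K) • u) ^ n := by
      simp only [P, map_pow, map_add, map_mul]
      simp [φ, Polynomial.eval₂RingHom', Nat.cast_smul_eq_nsmul, Nat.cast_comm]
    have hs : φ P = ∑ i ∈ range (P.natDegree + 2), (t : K) ^ i • P.coeff i := by
      change P.eval₂ (RingHom.id A) (algebraMap K A t) = _
      rw [Polynomial.eval₂_eq_sum_range' (RingHom.id A)
        (show P.natDegree < P.natDegree + 2 by omega)]
      refine sum_congr rfl fun i _ => ?_
      rw [Algebra.smul_def, Algebra.commutes]
      simp
    rw [← hs, hφ]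
    exact h t
  have := coeff_mem_of_forall_natCast W _ _ key (i := 1) (by omega)
  rwa [(coeff_one_C_add_pow z u n).2] at this

/-- The span of all powers `z ^ j`, `z ∈ L`, `j ≤ m`. -/
def powSpan (L : LieSubalgebra K A) (m : ℕ) : Submodule K A :=
  Submodule.span K {a | ∃ z ∈ L, ∃ j ≤ m, a = z ^ j}

/-- The span of all products of at most `m` elements of `L`. -/
def prodSpan (L : LieSubalgebra K A) (m : ℕ) : Submodule K A :=
  Submodule.span K {a | ∃ l : List A, (∀ x ∈ l, x ∈ L) ∧ l.length ≤ m ∧ a = l.prod}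

theorem mul_mem_prodSpan {L : LieSubalgebra K A} {z : A} (hz : z ∈ L) {m : ℕ} {a : A}
    (ha : a ∈ prodSpan L m) : z * a ∈ prodSpan L (m + 1) := by
  induction ha using Submodule.span_induction with
  | mem a h =>
    obtain ⟨l, hl, hm, rfl⟩ := h
    exact Submodule.subset_span ⟨z :: l, by simpa [hz] using hl, by simpa using hm, by simp⟩
  | zero => simp
  | add a b _ _ ha hb => rw [mul_add]; exact add_mem ha hb
  | smul c a _ ha => rw [mul_smul_comm]; exact Submodule.smul_mem _ _ ha

theorem powDeriv_sub_mem {L : LieSubalgebra K A} {z u : A} (hz : z ∈ L) (hu : u ∈ L) (n : ℕ) :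
    powDeriv z u (n + 1) - ((n : K) + 1) • (u * z ^ n) ∈ prodSpan L n := by
  induction n with
  | zero => simp [powDeriv]
  | succ n ih =>
    have e : powDeriv z u (n + 2) - (((n + 1 : ℕ) : K) + 1) • (u * z ^ (n + 1)) =
        z * (powDeriv z u (n + 1) - ((n : K) + 1) • (u * z ^ n)) +
          ((n : K) + 1) • (⁅z, u⁆ * z ^ n) := by
      rw [powDeriv, LieRing.of_associative_ring_bracket, mul_sub, sub_mul, mul_smul_comm,
        mul_assoc z u, mul_assoc u z, ← pow_succ', smul_sub]
      push_cast
      rw [add_smul ((n : K) + 1) 1, one_smul]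
      abel
    rw [e]
    refine add_mem (mul_mem_prodSpan hz ih) (Submodule.smul_mem _ _ (Submodule.subset_span ?_))
    refine ⟨⁅z, u⁆ :: List.replicate n z, ?_, by simp, by simp⟩
    intro x hx
    rcases List.mem_cons.1 hx with rfl | hx
    · exact L.lie_mem hz hu
    · rw [List.eq_of_mem_replicate hx]; exact hz

theorem prodSpan_le_powSpan [CharZero K] (L : LieSubalgebra K A) (m : ℕ) :
    prodSpan L m ≤ powSpan L m := by
  induction m with
  | zero =>
    refine Submodule.span_le.2 ?_
    rintro _ ⟨l, -, hl, rfl⟩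
    rw [List.eq_nil_of_length_eq_zero (Nat.le_zero.1 hl)]
    exact Submodule.subset_span ⟨0, L.zero_mem, 0, le_rfl, by simp⟩
  | succ m ih =>
    have mono {i j : ℕ} (h : i ≤ j) : powSpan L i ≤ powSpan L j :=
      Submodule.span_mono fun _ ⟨z, hz, n, hn, e⟩ => ⟨z, hz, n, hn.trans h, e⟩
    have mono' {i j : ℕ} (h : i ≤ j) : prodSpan L i ≤ prodSpan L j :=
      Submodule.span_mono fun _ ⟨l, hl, hn, e⟩ => ⟨l, hl, hn.trans h, e⟩
    have step : ∀ u ∈ L, ∀ a ∈ powSpan L m, u * a ∈ powSpan L (m + 1) := by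
      intro u hu a ha
      induction ha using Submodule.span_induction with
      | mem a h =>
        obtain ⟨z, hz, j, hj, rfl⟩ := h
        have h1 : powDeriv z u (j + 1) ∈ powSpan L (m + 1) :=
          powDeriv_mem _ _ _ _ fun t => Submodule.subset_span
            ⟨_, L.add_mem hz (L.smul_mem t hu), j + 1, by omega, rfl⟩
        have h2 := mono (Nat.le_succ m) (ih (mono' hj (powDeriv_sub_mem hz hu j)))
        have h3 := sub_mem h1 h2
        rw [sub_sub_cancel] at h3
        exact (Submodule.smul_mem_iff _ (Nat.cast_add_one_ne_zero j)).1 h3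
      | zero => simp
      | add a b _ _ ha hb => rw [mul_add]; exact add_mem ha hb
      | smul c a _ ha => rw [mul_smul_comm]; exact Submodule.smul_mem _ _ ha
    refine Submodule.span_le.2 ?_
    rintro _ ⟨l, hl, hm, rfl⟩
    cases l with
    | nil => exact Submodule.subset_span ⟨0, L.zero_mem, 0, by omega, by simp⟩
    | cons u l =>
      rw [List.prod_cons]
      refine step u (hl u (by simp)) _
        (ih (Submodule.subset_span ⟨l, ?_, by simpa using hm, rfl⟩))
      exact fun x hx => hl x (List.mem_cons_of_mem _ hx)

/-- Products of elements of a Lie subalgebra are linear combinations of powers of its elements. -/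
theorem list_prod_mem_span_pow [CharZero K] (L : LieSubalgebra K A) (l : List A)
    (hl : ∀ x ∈ l, x ∈ L) :
    l.prod ∈ Submodule.span K {a | ∃ z ∈ L, ∃ j : ℕ, a = z ^ j} :=
  Submodule.span_mono (by rintro _ ⟨z, hz, j, -, e⟩; exact ⟨z, hz, j, e⟩)
    (prodSpan_le_powSpan L l.length (Submodule.subset_span ⟨l, hl, le_rfl, rfl⟩))

end Span

section Adams

open TensorProduct

variable (K : Type*) [Field K] (α : Type*)

/-- The free associative algebra, with its basis of words. -/
abbrev WordAlg : Type _ := MonoidAlgebra K (FreeMonoid α)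

variable {α}

/-- A word, as an element of the free associative algebra. -/
abbrev wordA (w : List α) : WordAlg K α := MonoidAlgebra.single (FreeMonoid.ofList w) 1

theorem wordA_cons (a : α) (w : List α) : wordA K (a :: w) = wordA K [a] * wordA K w := by
  simp [wordA, FreeMonoid.ofList_cons]

theorem wordA_nil : wordA K ([] : List α) = 1 := rfl

theorem wordA_eq_prod (w : List α) : wordA K w = (w.map fun a => wordA K [a]).prod := by
  induction w with
  | nil => rfl
  | cons a w ih => rw [wordA_cons, List.map_cons, List.prod_cons, ih]

variable (α)

/-- The coproduct of the free associative algebra for which the generators are primitive. -/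
def comulA : WordAlg K α →ₐ[K] WordAlg K α ⊗[K] WordAlg K α :=
  MonoidAlgebra.lift K _ _ (FreeMonoid.lift fun a => wordA K [a] ⊗ₜ 1 + 1 ⊗ₜ wordA K [a])

/-- The augmentation of the free associative algebra. -/
def counitA : WordAlg K α →ₐ[K] K := MonoidAlgebra.lift K _ _ (FreeMonoid.lift fun _ => 0)

/-- The `n`-th Adams operation: the `n`-th convolution power of the identity. -/
def adams : ℕ → WordAlg K α →ₗ[K] WordAlg K α
  | 0 => Algebra.linearMap K _ ∘ₗ (counitA K α).toLinearMap
  | n + 1 => LinearMap.mul' K _ ∘ₗ TensorProduct.map LinearMap.id (adams n) ∘ₗ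
      (comulA K α).toLinearMap

/-- The free Lie algebra inside the free associative algebra. -/
def freeLie : LieSubalgebra K (WordAlg K α) :=
  LieSubalgebra.lieSpan K _ (Set.range fun a => wordA K [a])

variable {K α}

theorem comulA_gen (a : α) :
    comulA K α (wordA K [a]) = wordA K [a] ⊗ₜ 1 + 1 ⊗ₜ wordA K [a] := by
  simp [comulA]

theorem counitA_gen (a : α) : counitA K α (wordA K [a]) = 0 := by
  simp [counitA]

theorem comulA_lie {z : WordAlg K α} (hz : z ∈ freeLie K α) :
    comulA K α z = z ⊗ₜ 1 + 1 ⊗ₜ z := by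
  induction hz using LieSubalgebra.lieSpan_induction with
  | mem x h => obtain ⟨a, rfl⟩ := h; exact comulA_gen a
  | zero => simp
  | add x y _ _ hx hy => rw [map_add, hx, hy, add_tmul, tmul_add]; abel
  | smul c x _ hx => rw [map_smul, hx, smul_add, smul_tmul', tmul_smul]
  | lie x y _ _ hx hy =>
    rw [LieRing.of_associative_ring_bracket, map_sub, map_mul, map_mul, hx, hy]
    simp only [add_mul, mul_add, Algebra.TensorProduct.tmul_mul_tmul, one_mul, mul_one,
      sub_tmul, tmul_sub]
    abel

theorem counitA_lie {z : WordAlg K α} (hz : z ∈ freeLie K α) : counitA K α z = 0 := by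
  induction hz using LieSubalgebra.lieSpan_induction with
  | mem x h => obtain ⟨a, rfl⟩ := h; exact counitA_gen a
  | zero => simp
  | add x y _ _ hx hy => rw [map_add, hx, hy, add_zero]
  | smul c x _ hx => rw [map_smul, hx, smul_zero]
  | lie x y _ _ hx hy =>
    rw [LieRing.of_associative_ring_bracket, map_sub, map_mul, map_mul, hx, hy]; simp

/-- Powers of Lie elements are eigenvectors of the Adams operations. -/
theorem adams_pow {z : WordAlg K α} (hz : z ∈ freeLie K α) (n m : ℕ) :
    adams K α n (z ^ m) = (n : K) ^ m • z ^ m := by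
  induction n generalizing m with
  | zero =>
    rcases Nat.eq_zero_or_pos m with rfl | hm
    · simp only [adams, LinearMap.comp_apply, AlgHom.toLinearMap_apply, pow_zero, map_one,
        Algebra.linearMap_apply, one_smul]
    · simp [adams, counitA_lie hz, hm.ne']
  | succ n ih =>
    have hc : Commute (z ⊗ₜ[K] (1 : WordAlg K α)) ((1 : WordAlg K α) ⊗ₜ[K] z) := by
      simp [commute_iff_eq]
    have h1 : comulA K α (z ^ m) =
        ∑ i ∈ range (m + 1), (m.choose i : K) • ((z ^ i) ⊗ₜ[K] (z ^ (m - i))) := by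
      rw [map_pow, comulA_lie hz, hc.add_pow]
      refine sum_congr rfl fun i _ => ?_
      rw [Algebra.TensorProduct.tmul_pow, Algebra.TensorProduct.tmul_pow,
        Algebra.TensorProduct.tmul_mul_tmul, one_pow, one_pow, mul_one, one_mul,
        ← Nat.cast_comm, ← nsmul_eq_mul, Nat.cast_smul_eq_nsmul]
    simp only [adams, LinearMap.comp_apply, AlgHom.toLinearMap_apply, h1, map_sum, map_smul,
      TensorProduct.map_tmul, LinearMap.id_apply, LinearMap.mul'_apply, ih]
    rw [Nat.cast_add_one, add_comm (n : K), add_pow, sum_smul]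
    refine sum_congr rfl fun i hi => ?_
    rw [mul_smul_comm, ← pow_add, Nat.add_sub_cancel' (Nat.lt_succ_iff.1 (mem_range.1 hi)),
      smul_smul, one_pow, one_mul, mul_comm]

/-- All ways of splitting a word into a subword and its complement. -/
def wordSplits : List α → List (List α × List α)
  | [] => [([], [])]
  | a :: w => (wordSplits w).map (fun s => (a :: s.1, s.2)) ++
      (wordSplits w).map (fun s => (s.1, a :: s.2))

theorem comulA_word (w : List α) :
    comulA K α (wordA K w) = ((wordSplits w).map fun s => wordA K s.1 ⊗ₜ wordA K s.2).sum := by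
  induction w with
  | nil => simp [wordSplits, wordA_nil, Algebra.TensorProduct.one_def]
  | cons a w ih =>
    rw [wordA_cons, map_mul, comulA_gen, ih, add_mul, ← List.sum_map_mul_left,
      ← List.sum_map_mul_left, wordSplits, List.map_append, List.sum_append, List.map_map,
      List.map_map]
    simp only [Algebra.TensorProduct.tmul_mul_tmul, one_mul, ← wordA_cons, Function.comp_def]

theorem adams_succ_word (n : ℕ) (w : List α) :
    adams K α (n + 1) (wordA K w) =
      ((wordSplits w).map fun s => wordA K s.1 * adams K α n (wordA K s.2)).sum := by
  simp only [adams, LinearMap.comp_apply, AlgHom.toLinearMap_apply, comulA_word, map_list_sum,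
    List.map_map, Function.comp_def, TensorProduct.map_tmul, LinearMap.id_apply,
    LinearMap.mul'_apply]

theorem coeff_wordA (w v : List α) [DecidableEq α] :
    (wordA K w).coeff (FreeMonoid.ofList v) = if v = w then 1 else 0 := by
  classical
  rw [wordA, MonoidAlgebra.coeff_single, Finsupp.single_apply]
  simp only [EmbeddingLike.apply_eq_iff_eq, eq_comm]

theorem coeff_mul_word (f g : WordAlg K α) (v : List α) :
    (f * g).coeff (FreeMonoid.ofList v) = ∑ i ∈ range (v.length + 1),
      f.coeff (FreeMonoid.ofList (v.take i)) * g.coeff (FreeMonoid.ofList (v.drop i)) := by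
  classical
  rw [MonoidAlgebra.coeff_mul_antidiag f g (FreeMonoid.ofList v) ((range (v.length + 1)).image
    fun i => (FreeMonoid.ofList (v.take i), FreeMonoid.ofList (v.drop i)))]
  · rw [sum_image]
    intro i hi j hj h
    have := congrArg (fun p => (FreeMonoid.toList p.1).length) h
    simp only [FreeMonoid.toList_ofList, List.length_take] at this
    simp only [coe_range, Set.mem_Iio] at hi hj
    omega
  · rintro ⟨a, b⟩
    simp only [mem_image, mem_range, Prod.mk.injEq]
    constructor
    · rintro ⟨i, -, rfl, rfl⟩
      rw [← FreeMonoid.ofList_append, List.take_append_drop]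
    · intro h
      have h' : v = a.toList ++ b.toList := by
        rw [← FreeMonoid.toList_mul, h, FreeMonoid.toList_ofList]
      exact ⟨a.toList.length, by simp [h'], by simp [h'], by simp [h']⟩

theorem adams_zero_word [DecidableEq α] (w : List α) :
    adams K α 0 (wordA K w) = if w = [] then 1 else 0 := by
  cases w with
  | nil =>
    simp only [adams, LinearMap.comp_apply, AlgHom.toLinearMap_apply, wordA_nil, map_one,
      Algebra.linearMap_apply, if_true]
  | cons a w =>
    simp only [adams, LinearMap.comp_apply, AlgHom.toLinearMap_apply]
    rw [wordA_cons, map_mul, counitA_gen]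
    simp

theorem sublist_of_mem_wordSplits {w : List α} {s : List α × List α} (hs : s ∈ wordSplits w) :
    s.1.Sublist w ∧ s.2.Sublist w := by
  induction w generalizing s with
  | nil => simp [wordSplits] at hs; simp [hs]
  | cons a w ih =>
    simp only [wordSplits, List.mem_append, List.mem_map] at hs
    obtain ⟨t, ht, rfl⟩ | ⟨t, ht, rfl⟩ := hs
    · exact ⟨(ih ht).1.cons_cons a, (ih ht).2.cons a⟩
    · exact ⟨(ih ht).1.cons a, (ih ht).2.cons_cons a⟩

/-- Counting the splittings of a strictly increasing word with prescribed subword and with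
complement prescribed up to reordering. -/
theorem count_wordSplits [LinearOrder α] (w u v : List α) (hw : w.Pairwise (· < ·)) :
    ((wordSplits w).map fun s => if u = s.1 ∧ v.Perm s.2 then (1 : K) else 0).sum =
      if u.Pairwise (· < ·) ∧ (u ++ v).Perm w then 1 else 0 := by
  induction w generalizing u v with
  | nil =>
    have : u = [] ∧ v = [] ↔ u.Pairwise (· < ·) ∧ u = [] ∧ v = [] :=
      ⟨fun h => ⟨h.1 ▸ List.Pairwise.nil, h⟩, fun h => h.2⟩
    simp [wordSplits, ← this]
  | cons c w ih =>
    obtain ⟨hc, hw⟩ := List.pairwise_cons.1 hw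
    have hcw : c ∉ w := fun h => lt_irrefl c (hc c h)
    rw [wordSplits, List.map_append, List.sum_append, List.map_map, List.map_map]
    simp only [Function.comp_def]
    by_cases hu : ∃ u', u = c :: u'
    · obtain ⟨u', rfl⟩ := hu
      have h2 : ((wordSplits w).map fun s =>
          if c :: u' = s.1 ∧ v.Perm (c :: s.2) then (1 : K) else 0).sum = 0 := by
        refine List.sum_eq_zero fun x hx => ?_
        obtain ⟨s, hs, rfl⟩ := List.mem_map.1 hx
        refine if_neg fun h => hcw ((sublist_of_mem_wordSplits hs).1.subset ?_)
        rw [← h.1]; simp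
      rw [h2, add_zero]
      simp only [List.cons.injEq, true_and]
      rw [ih u' v hw]
      refine if_congr ?_ rfl rfl
      rw [List.pairwise_cons, List.cons_append, List.perm_cons]
      refine ⟨fun h => ⟨⟨fun x hx => hc x (h.2.subset (by simp [hx])), h.1⟩, h.2⟩,
        fun h => ⟨h.1.2, h.2⟩⟩
    · have h1 : ((wordSplits w).map fun s =>
          if u = c :: s.1 ∧ v.Perm s.2 then (1 : K) else 0).sum = 0 := by
        refine List.sum_eq_zero fun x hx => ?_
        obtain ⟨s, hs, rfl⟩ := List.mem_map.1 hx
        exact if_neg fun h => hu ⟨_, h.1⟩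
      rw [h1, zero_add]
      simp only [List.perm_comm (l₁ := v), List.cons_perm_iff_perm_erase]
      by_cases hv : c ∈ v
      · simp only [hv, true_and, List.perm_comm (l₂ := v.erase c)]
        rw [ih u (v.erase c) hw]
        refine if_congr (and_congr_right fun _ => ?_) rfl rfl
        rw [← List.perm_cons c]
        have : (u ++ v).Perm (c :: (u ++ v.erase c)) :=
          ((List.perm_cons_erase hv).append_left u).trans List.perm_middle
        exact ⟨this.trans, this.symm.trans⟩
      · simp only [hv, false_and, and_false, if_false]
        rw [if_neg]
        · simp
        rintro ⟨h, hp⟩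
        have hcu : c ∈ u := by
          have := hp.symm.subset (List.mem_cons_self (a := c))
          simpa [hv] using this
        cases u with
        | nil => simp at hcu
        | cons d u =>
          have hdc : c ≠ d := fun e => hu ⟨u, by rw [e]⟩
          have hlt : d < c := (List.pairwise_cons.1 h).1 c ((List.mem_cons.1 hcu).resolve_left hdc)
          have hd : d ∈ c :: w := hp.subset (by simp)
          exact lt_asymm hlt (hc d ((List.mem_cons.1 hd).resolve_left hdc.symm))

theorem sum_map_finsetSum {M β ι : Type*} [AddCommMonoid M] (l : List β) (t : Finset ι)
    (f : β → ι → M) :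
    (l.map fun s => ∑ i ∈ t, f s i).sum = ∑ i ∈ t, (l.map fun s => f s i).sum := by
  induction l with
  | nil => simp
  | cons b l ih => simp only [List.map_cons, List.sum_cons, ih, sum_add_distrib]

/-- On a strictly increasing word `w`, the `n`-th Adams operation is the component of content `w`
of the `n`-th power of the sum of all strictly increasing words. -/
theorem coeff_adams_word [LinearOrder α] (X : WordAlg K α)
    (hX : ∀ u : List α, u.Nodup →
      X.coeff (FreeMonoid.ofList u) = if u.Pairwise (· < ·) then 1 else 0)
    (n : ℕ) (w v : List α) (hw : w.Pairwise (· < ·)) :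
    (adams K α n (wordA K w)).coeff (FreeMonoid.ofList v) =
      if v.Perm w then (X ^ n).coeff (FreeMonoid.ofList v) else 0 := by
  induction n generalizing w v with
  | zero =>
    rw [adams_zero_word, pow_zero]
    by_cases h : w = []
    · subst h
      simp only [if_true, List.perm_nil]
      rw [← wordA_nil, coeff_wordA]
      simp
    · rw [if_neg h, ← wordA_nil, coeff_wordA]
      split_ifs with h1 h2
      · exact absurd (List.nil_perm.1 (h2 ▸ h1)) h
      all_goals simp
  | succ n ih =>
    let φ : WordAlg K α →+ K :=
      { toFun := fun f => f.coeff (FreeMonoid.ofList v), map_zero' := rfl, map_add' := by simp }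
    change φ _ = _
    rw [adams_succ_word, map_list_sum, List.map_map]
    have h1 : ((wordSplits w).map (φ ∘ fun s => wordA K s.1 * adams K α n (wordA K s.2))) =
        (wordSplits w).map fun s => ∑ i ∈ range (v.length + 1),
          (if v.take i = s.1 ∧ (v.drop i).Perm s.2 then (1 : K) else 0) *
            (X ^ n).coeff (FreeMonoid.ofList (v.drop i)) := by
      refine List.map_congr_left fun s hs => ?_
      change (wordA K s.1 * adams K α n (wordA K s.2)).coeff (FreeMonoid.ofList v) = _
      rw [coeff_mul_word]
      refine sum_congr rfl fun i _ => ?_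
      rw [coeff_wordA, ih s.2 _ (hw.sublist (sublist_of_mem_wordSplits hs).2), ite_and]
      split_ifs <;> simp
    rw [h1, sum_map_finsetSum]
    simp only [List.sum_map_mul_right, count_wordSplits _ _ _ hw, List.take_append_drop]
    split_ifs with hv
    · rw [pow_succ', coeff_mul_word]
      refine sum_congr rfl fun i _ => ?_
      have hnd : v.Nodup := hv.nodup_iff.2 (hw.imp ne_of_lt)
      rw [hX _ (hnd.sublist (List.take_sublist i v))]
      simp [hv]
    · simp [hv]

theorem coeff_gen_mul_nil (a : α) (f : WordAlg K α) :
    (wordA K [a] * f).coeff (FreeMonoid.ofList []) = 0 := by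
  classical
  rw [coeff_mul_word]
  simp only [coeff_wordA]
  simp

theorem coeff_gen_mul_cons [DecidableEq α] (a d : α) (u : List α) (f : WordAlg K α) :
    (wordA K [a] * f).coeff (FreeMonoid.ofList (d :: u)) =
      if d = a then f.coeff (FreeMonoid.ofList u) else 0 := by
  rw [coeff_mul_word]
  simp only [coeff_wordA]
  rw [sum_eq_single 1]
  · simp
  · intro i _ hi
    rw [if_neg, zero_mul]
    intro h
    have := congrArg List.length h
    simp only [List.length_take, List.length_cons, List.length_nil] at this
    cases u with
    | nil =>
      rcases i with _ | i
      · simp at h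
      · simp_all
    | cons => simp at this; omega
  · simp

theorem coeff_prod_one_add [DecidableEq α] (l u : List α) (hl : l.Nodup) :
    ((l.map fun a => 1 + wordA K [a]).prod).coeff (FreeMonoid.ofList u) =
      if u.Sublist l then 1 else 0 := by
  induction l generalizing u with
  | nil => rw [List.map_nil, List.prod_nil, ← wordA_nil, coeff_wordA]; simp
  | cons c l ih =>
    obtain ⟨hc, hl⟩ := List.nodup_cons.1 hl
    rw [List.map_cons, List.prod_cons, add_mul, one_mul, MonoidAlgebra.coeff_add,
      Finsupp.add_apply, ih u hl]
    cases u with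
    | nil => rw [coeff_gen_mul_nil]; simp
    | cons d u =>
      rw [coeff_gen_mul_cons, ih u hl]
      by_cases h : d = c
      · subst h
        have : ¬ (d :: u).Sublist l := fun h => hc (h.subset (by simp))
        simp [this]
      · have : (d :: u).Sublist (c :: l) ↔ (d :: u).Sublist l := by
          rw [List.sublist_cons_iff]
          simp [h]
        simp [h, this]

end Adams

section Bridge

variable {K : Type} [Field K] {n : ℕ}

/-- The inclusion of the free associative algebra into its degree completion. -/
def toFhat : WordAlg K (Fin n) →ₗ[K] Fhat K n where
  toFun f := fun w => f.coeff (FreeMonoid.ofList w)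
  map_add' f g := by ext; simp
  map_smul' c f := by ext; simp

theorem toFhat_apply (f : WordAlg K (Fin n)) (w : List (Fin n)) :
    toFhat f w = f.coeff (FreeMonoid.ofList w) := rfl

theorem toFhat_word (w : List (Fin n)) : toFhat (wordA K w) = delta w := by
  ext v
  rw [toFhat_apply, coeff_wordA, delta]

theorem toFhat_one : toFhat (1 : WordAlg K (Fin n)) = oneF := toFhat_word []

theorem toFhat_mul (f g : WordAlg K (Fin n)) : toFhat (f * g) = mulF (toFhat f) (toFhat g) :=
  funext fun v => coeff_mul_word f g v

theorem toFhat_pow (f : WordAlg K (Fin n)) (m : ℕ) : toFhat (f ^ m) = powF (toFhat f) m := by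
  induction m with
  | zero => exact toFhat_one
  | succ m ih => rw [pow_succ', toFhat_mul, ih, powF]

theorem toFhat_prod (l : List (WordAlg K (Fin n))) :
    toFhat l.prod = prodListF (l.map toFhat) := by
  induction l with
  | nil => exact toFhat_one
  | cons f l ih => rw [List.prod_cons, toFhat_mul, ih, List.map_cons, prodListF]

theorem isLieElem_toFhat {z : WordAlg K (Fin n)} (hz : z ∈ freeLie K (Fin n)) :
    IsLieElem (toFhat z) := by
  induction hz using LieSubalgebra.lieSpan_induction with
  | mem x h => obtain ⟨a, rfl⟩ := h; rw [toFhat_word]; exact .gen a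
  | zero => rw [map_zero]; exact .zero
  | add x y _ _ hx hy => rw [map_add]; exact .add hx hy
  | smul c x _ hx => rw [map_smul]; exact .smul c hx
  | lie x y _ _ hx hy =>
    rw [LieRing.of_associative_ring_bracket, map_sub, toFhat_mul, toFhat_mul]
    exact .lieBracket hx hy

theorem symProd_const [CharZero K] (z : WordAlg K (Fin n)) (m : ℕ) :
    symProd (fun _ : Fin m => toFhat z) = toFhat (z ^ m) := by
  have h : prodListF (List.ofFn fun _ : Fin m => toFhat z) = toFhat (z ^ m) := by
    rw [List.ofFn_const, ← List.map_replicate, ← toFhat_prod, List.prod_replicate]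
  simp only [symProd, Function.comp_def, h, sum_const, card_univ, Fintype.card_perm,
    Fintype.card_fin]
  rw [← Nat.cast_smul_eq_nsmul K, smul_smul,
    inv_mul_cancel₀ (Nat.cast_ne_zero.2 (Nat.factorial_ne_zero m)), one_smul]

/-- The values of the Adams operations on `a` are polynomial in `n`, with linear coefficient
`p a`. -/
theorem exists_polynomial_adams [CharZero K] (p : Fhat K n →ₗ[K] Fhat K n)
    (h0 : p oneF = 0)
    (h1 : ∀ z : Fhat K n, IsLieElem z → p z = z)
    (hk : ∀ m : ℕ, 2 ≤ m → ∀ z : Fin m → Fhat K n,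
      (∀ i, IsLieElem (z i)) → p (symProd z) = 0)
    (w v : List (Fin n)) :
    ∃ P : Polynomial K, (∀ m : ℕ, P.eval (m : K) = toFhat (adams K (Fin n) m (wordA K w)) v) ∧
      P.coeff 1 = p (delta w) v := by
  rw [← toFhat_word]
  have hw : wordA K w ∈ Submodule.span K {a | ∃ z ∈ freeLie K (Fin n), ∃ j : ℕ, a = z ^ j} := by
    rw [wordA_eq_prod]
    refine list_prod_mem_span_pow _ _ fun x hx => ?_
    obtain ⟨a, -, rfl⟩ := List.mem_map.1 hx
    exact LieSubalgebra.subset_lieSpan ⟨a, rfl⟩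
  generalize wordA K w = a at hw ⊢
  induction hw using Submodule.span_induction with
  | mem a h =>
    obtain ⟨z, hz, j, rfl⟩ := h
    refine ⟨Polynomial.C (toFhat (z ^ j) v) * Polynomial.X ^ j, fun m => ?_, ?_⟩
    · rw [adams_pow hz, map_smul, Pi.smul_apply, smul_eq_mul, Polynomial.eval_mul,
        Polynomial.eval_C, Polynomial.eval_pow, Polynomial.eval_X, mul_comm]
    · rw [Polynomial.coeff_C_mul, Polynomial.coeff_X_pow]
      have hp : p (toFhat (z ^ j)) = if 1 = j then toFhat (z ^ j) else 0 := by
        match j with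
        | 0 => simp [toFhat_one, h0]
        | 1 => simp [h1 _ (isLieElem_toFhat hz)]
        | j + 2 =>
          rw [← symProd_const, hk (j + 2) (by omega) _ fun _ => isLieElem_toFhat hz]
          simp
      rw [hp]
      split_ifs <;> simp
  | zero => exact ⟨0, by simp, by simp⟩
  | add a b _ _ ha hb =>
    obtain ⟨P, hP, hP'⟩ := ha
    obtain ⟨Q, hQ, hQ'⟩ := hb
    exact ⟨P + Q, fun m => by simp [hP, hQ], by simp [hP', hQ']⟩
  | smul c a _ ha =>
    obtain ⟨P, hP, hP'⟩ := ha
    exact ⟨Polynomial.C c * P, fun m => by simp [hP], by simp [hP']⟩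

theorem coeff_one_descPochhammer (j : ℕ) :
    (descPochhammer K (j + 1)).coeff 1 = (-1) ^ j * (j.factorial : K) := by
  rw [descPochhammer_succ_left, Polynomial.coeff_X_mul, Polynomial.coeff_zero_eq_eval_zero,
    Polynomial.eval_comp]
  simp only [Polynomial.eval_sub, Polynomial.eval_X, Polynomial.eval_one, zero_sub]
  induction j with
  | zero => simp
  | succ j ih =>
    rw [descPochhammer_succ_eval, ih, Nat.factorial_succ]
    push_cast
    ring

theorem mulF_congr_of_nodup {f f' g g' : Fhat K n} (hf : ∀ v : List (Fin n), v.Nodup → f v = f' v)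
    (hg : ∀ v : List (Fin n), v.Nodup → g v = g' v) (v : List (Fin n)) (hv : v.Nodup) :
    mulF f g v = mulF f' g' v :=
  sum_congr rfl fun i _ => by
    rw [hf _ (hv.sublist (List.take_sublist i v)), hg _ (hv.sublist (List.drop_sublist i v))]

theorem powF_congr_of_nodup {f f' : Fhat K n} (hf : ∀ v : List (Fin n), v.Nodup → f v = f' v)
    (m : ℕ) (v : List (Fin n)) (hv : v.Nodup) : powF f m v = powF f' m v := by
  induction m generalizing v with
  | zero => rfl
  | succ m ih => exact mulF_congr_of_nodup hf ih v hv

theorem prodListF_congr_of_nodup {ι : Type*} (l : List ι) {f f' : ι → Fhat K n}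
    (hf : ∀ i, ∀ v : List (Fin n), v.Nodup → f i v = f' i v) (v : List (Fin n)) (hv : v.Nodup) :
    prodListF (l.map f) v = prodListF (l.map f') v := by
  induction l generalizing v with
  | nil => rfl
  | cons i l ih => exact mulF_congr_of_nodup (hf i) ih v hv

theorem powF_gen (i : Fin n) (j : ℕ) :
    powF (delta [i] : Fhat K n) j = delta (List.replicate j i) := by
  rw [← toFhat_word, ← toFhat_pow, ← toFhat_word, wordA_eq_prod K (List.replicate j i),
    List.map_replicate, List.prod_replicate]

theorem expF_gen_of_nodup (i : Fin n) (v : List (Fin n)) (hv : v.Nodup) :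
    expF (delta [i] : Fhat K n) v = toFhat (1 + wordA K [i]) v := by
  rw [map_add, toFhat_one, toFhat_word]
  simp only [expF, powF_gen, Pi.add_apply]
  match v with
  | [] => simp [oneF, delta]
  | [a] => simp [oneF, delta, sum_range_succ]
  | a :: b :: v =>
    simp only [oneF, delta]
    rw [sum_eq_zero]
    · simp
    intro j _
    rw [if_neg, mul_zero]
    intro h
    rw [h, List.nodup_replicate] at hv
    have := congrArg List.length h
    simp at this
    omega

theorem toFhat_pow_eq_zero {f : WordAlg K (Fin n)} (hf : toFhat f [] = 0) {j : ℕ}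
    {v : List (Fin n)} (h : v.length < j) : toFhat (f ^ j) v = 0 := by
  induction j generalizing v with
  | zero => omega
  | succ j ih =>
    rw [pow_succ', toFhat_mul]
    refine sum_eq_zero fun i hi => ?_
    rcases Nat.eq_zero_or_pos i with rfl | hi0
    · rw [List.take_zero, hf, zero_mul]
    · rw [mem_range] at hi
      rw [ih (by rw [List.length_drop]; omega), mul_zero]

/-- The sum of all strictly increasing words. -/
def increasingSum (K : Type) [Field K] (k : ℕ) : WordAlg K (Fin k) :=
  ((List.finRange k).map fun i => 1 + wordA K [i]).prod

theorem toFhat_increasingSum {k : ℕ} (u : List (Fin k)) (hu : u.Nodup) :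
    toFhat (increasingSum K k) u = if u.Pairwise (· < ·) then 1 else 0 := by
  rw [toFhat_apply, increasingSum, coeff_prod_one_add _ _ (List.nodup_finRange k)]
  refine if_congr ⟨fun h => (List.pairwise_lt_finRange k).sublist h, fun h => ?_⟩ rfl rfl
  exact List.sublist_of_subperm_of_pairwise
    (List.subperm_of_subset hu fun x _ => List.mem_finRange x) h (List.pairwise_lt_finRange k)

theorem logF_eq {k : ℕ} {v : List (Fin k)} (hv : v.Nodup) :
    logF (prodListF (List.ofFn fun i : Fin k => expF (delta [i] : Fhat K k))) v =
      ∑ j ∈ Icc 1 v.length,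
        (-1 : K) ^ (j + 1) * (j : K)⁻¹ * toFhat ((increasingSum K k - 1) ^ j) v := by
  refine sum_congr rfl fun j _ => ?_
  rw [toFhat_pow, map_sub, toFhat_one]
  congr 1
  refine powF_congr_of_nodup (fun u hu => ?_) j v hv
  rw [Pi.sub_apply, Pi.sub_apply, increasingSum, toFhat_prod, List.map_map, List.ofFn_eq_map,
    prodListF_congr_of_nodup _ expF_gen_of_nodup u hu]
  rfl

/-- A polynomial interpolating the powers of a series with constant term `1` has the coefficient
of its logarithm as linear coefficient. -/
theorem coeff_one_of_eval_eq_pow [CharZero K] {X : WordAlg K (Fin n)} (hX : toFhat X [] = 1)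
    (v : List (Fin n)) {P : Polynomial K} (hP : ∀ m : ℕ, P.eval (m : K) = toFhat (X ^ m) v) :
    P.coeff 1 = ∑ j ∈ Icc 1 v.length,
      (-1 : K) ^ (j + 1) * (j : K)⁻¹ * toFhat ((X - 1) ^ j) v := by
  have hZ : toFhat (X - 1) [] = 0 := by
    rw [map_sub, Pi.sub_apply, hX, toFhat_one]; simp [oneF]
  let Q : Polynomial K := ∑ j ∈ range (v.length + 1),
    Polynomial.C (toFhat ((X - 1) ^ j) v / (j.factorial : K)) * descPochhammer K j
  have hPQ : P = Q := by
    refine Polynomial.eq_of_infinite_eval_eq _ _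
      ((Set.infinite_range_of_injective (Nat.cast_injective (R := K))).mono ?_)
    rintro _ ⟨m, rfl⟩
    have e1 : toFhat (X ^ m) v =
        ∑ j ∈ range (m + 1), (m.choose j : K) * toFhat ((X - 1) ^ j) v := by
      conv_lhs => rw [← sub_add_cancel X 1, (Commute.one_right (X - 1)).add_pow]
      simp only [one_pow, mul_one, ← Nat.cast_comm, ← nsmul_eq_mul, map_sum, map_nsmul,
        Finset.sum_apply, Pi.smul_apply]
    have e2 : ∑ j ∈ range (m + 1), (m.choose j : K) * toFhat ((X - 1) ^ j) v =
        ∑ j ∈ range (v.length + 1), (m.choose j : K) * toFhat ((X - 1) ^ j) v := by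
      rcases le_total m v.length with h | h
      · refine sum_subset (range_mono (by omega)) fun j _ hj => ?_
        rw [Nat.choose_eq_zero_of_lt (by simpa using hj), Nat.cast_zero, zero_mul]
      · refine (sum_subset (range_mono (by omega)) fun j _ hj => ?_).symm
        rw [toFhat_pow_eq_zero hZ (by simpa using hj), mul_zero]
    change P.eval _ = Q.eval _
    rw [hP, e1, e2, Polynomial.eval_finsetSum]
    refine sum_congr rfl fun j _ => ?_
    rw [Polynomial.eval_mul, Polynomial.eval_C, Nat.cast_choose_eq_descPochhammer_div]
    ring
  rw [hPQ]
  simp only [Q, Polynomial.finsetSum_coeff, Polynomial.coeff_C_mul]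
  rw [sum_range_succ', descPochhammer_zero, Polynomial.coeff_one, if_neg one_ne_zero, mul_zero,
    add_zero, range_eq_Ico, sum_Ico_add' (fun j => toFhat ((X - 1) ^ j) v / (j.factorial : K) *
      (descPochhammer K j).coeff 1) 0 v.length 1]
  refine sum_congr rfl fun j hj => ?_
  obtain ⟨j, rfl⟩ := Nat.exists_eq_add_of_le' (mem_Icc.1 hj).1
  rw [coeff_one_descPochhammer, Nat.factorial_succ]
  have h₁ : ((j + 1 : ℕ) : K) ≠ 0 := Nat.cast_ne_zero.2 j.succ_ne_zero
  have h₂ : (j.factorial : K) ≠ 0 := Nat.cast_ne_zero.2 j.factorial_ne_zero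
  rw [Nat.cast_mul]
  field_simp
  ring

end Bridge

/-- **(Reutenauer, Lemma 3.10).**  In the free associative algebra
`F_k = U(f_k)` on generators `y₁, …, y_k` (here `yⱼ = delta [j-1]`, the
word `y₁ ⋯ y_k` being `delta [0, 1, …, k-1]`), let `p_k : F_k → f_k` be the
composition of the inverse of the symmetrization isomorphism `S(f_k) → F_k`
with the projection onto `S¹(f_k) = f_k`; as in the paper, `p_k` is exactly
characterized by the hypotheses below (linearity; `p ∘ sym` vanishes on `S⁰`
and on `Sᵏ`, `k ≥ 2`, and is the identity on `S¹ = f_k`).  Then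
`p_k(y₁ ⋯ y_k) = CBH_k(y₁, …, y_k)`, the multilinear part of
`log (e^{y₁} ⋯ e^{y_k})`. -/
theorem p_word_eq_CBH {K : Type} [Field K] [CharZero K] {k : ℕ}
    (p : Fhat K k →ₗ[K] Fhat K k)
    (h0 : p oneF = 0)
    (h1 : ∀ z : Fhat K k, IsLieElem z → p z = z)
    (hk : ∀ m : ℕ, 2 ≤ m → ∀ z : Fin m → Fhat K k,
      (∀ i, IsLieElem (z i)) → p (symProd z) = 0) :
    p (delta (List.ofFn (fun i : Fin k => i))) = CBHuniv K k := by
  have hl : List.ofFn (fun i : Fin k => i) = List.finRange k := List.ofFn_id k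
  rw [hl]
  funext v
  obtain ⟨P, hP, hP1⟩ := exists_polynomial_adams p h0 h1 hk (List.finRange k) v
  have hX := toFhat_increasingSum (K := K) (k := k)
  simp only [toFhat_apply, coeff_adams_word (increasingSum K k) hX _ _ v
    (List.pairwise_lt_finRange k)] at hP
  rw [← hP1, CBHuniv]
  have hv : v.length = k ∧ v.Nodup ↔ v.Perm (List.finRange k) := by
    refine ⟨fun h => ?_, fun h => ⟨by simpa using h.length_eq,
      h.nodup_iff.2 (List.nodup_finRange k)⟩⟩
    exact (List.subperm_of_subset h.2 fun x _ => List.mem_finRange x).perm_of_length_le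
      (by simp [h.1])
  by_cases h : v.Perm (List.finRange k)
  · simp only [h, if_true] at hP
    rw [if_pos (hv.2 h), logF_eq (hv.2 h).2]
    exact coeff_one_of_eval_eq_pow (by simp [hX]) v hP
  · simp only [h, if_false] at hP
    have hP0 : P = 0 := Polynomial.eq_of_infinite_eval_eq _ _
      ((Set.infinite_range_of_injective (Nat.cast_injective (R := K))).mono
        (by rintro _ ⟨m, rfl⟩; simp [hP]))
    rw [if_neg (hv.not.2 h), hP0, Polynomial.coeff_zero]

end CBHPaper
end
end

section
/- Let $A_0$, $A_1$ generate the free associative algebra $F_2$ over $\mathbb{R}$ (or $\mathbb{C}$), with free Lie subalgebra $\mathfrak{f}_2$ and degree completions $\widehat{F}_2$, $\widehat{\mathfrak{f}}_2$. Let $\Phi \in \widehat{F}_2$ be the KZ associator, the renormalized holonomy $\Phi = G_1 G_0^{-1}$ of $G'(z) = (A_0/z + A_1/(z-1))G(z)$ on $]0,1[$, where $G_0(z) \sim z^{A_0}$ as $z \to 0^+$ and $G_1(z) \sim (1-z)^{A_1}$ as $z \to 1^-$. Then $\log(\Phi) = \sum_{n\geq 1} \sum \omega_{a_1,\dots,a_n}\,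 C^{a_1,\dots,a_n}_{i_1,\dots,i_n}\, \mathrm{CBH}_n(A_{i_n},\dots,A_{i_1})$, where the inner sum runs over admissible sequences $(a_1,\dots,a_n) \in \{0,1\}^n$ and all sequences $(i_1,\dots,i_n) \in \{0,1\}^n$, $\omega_{a_1,\dots,a_n}$ are the iterated-integral coefficients (multiple zeta values up to sign), and $C^{a_1,\dots,a_n}_{i_1,\dots,i_n}$ are the integer coefficients of Le and Murakami. -/
/-!
Common setup: a concrete model of the degree completion `F̂ₙ` of the free
associative algebra on `n` generators `x₁, …, xₙ` over a field `K` of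
characteristic zero, as the space of formal (possibly infinite) `K`-linear
combinations of words in the letters `x₁, …, xₙ`, i.e. functions
`List (Fin n) → K` (the value at a word is its coefficient).  The product is
the (well-defined) convolution/concatenation product.  The free associative
algebra `Fₙ` sits inside as the finitely supported functions; the word `w`
corresponds to `delta w`, and `xᵢ = delta [i]`.
-/

noncomputable section

open Finset

namespace CBHPaper

open MeasureTheory Filter

/-- The connection coefficient `A₀/z + A₁/(z-1)` of the KZ equation, as an
element of `F̂₂` (the generators being `A₀ = delta [0]`, `A₁ = delta [1]`). -/
def kzA (z : ℝ) : Fhat ℝ 2 :=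
  z⁻¹ • delta [(0 : Fin 2)] + (z - 1)⁻¹ • delta [(1 : Fin 2)]

/-- The simplex `{0 ≤ t₁ ≤ ⋯ ≤ t_m ≤ 1}`. -/
def simplex01 (m : ℕ) : Set (Fin m → ℝ) :=
  {t | Monotone t ∧ ∀ j, t j ∈ Set.Icc (0 : ℝ) 1}

/-- The iterated integral `ω_{a₁,…,a_m} = ∫₀¹ ω_{a₁} ∘ ⋯ ∘ ω_{a_m}
= ∫_{0 ≤ t₁ ≤ ⋯ ≤ t_m ≤ 1} ω_{a₁}(t₁) ∧ ⋯ ∧ ω_{a_m}(t_m)`, where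
`ω₀(t) = dt/t` and `ω₁(t) = dt/(t-1)`.  For admissible `(a₁,…,a_m)` these
are, up to sign, the multiple zeta values. -/
def omegaMZV {m : ℕ} (a : Fin m → Fin 2) : ℝ :=
  ∫ t in simplex01 m, ∏ j, (if a j = 0 then (t j)⁻¹ else (t j - 1)⁻¹)

/-- The right-hand side of Le–Murakami's defining relation for the integer
coefficients `C^{a₁,…,a_m}_{i₁,…,i_m}`:
`∑_{S ⊆ {α | a_α = 0}, T ⊆ {β | a_β = 1}} (-1)^{|S|+|T|} A₁^{|T|} A(a)^{S,T} A₀^{|S|}`,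
where `A(a)^{S,T} = ∏_{α ∈ [1,m] ∖ (S ∪ T)} A_{a_α}`, the product in
decreasing order of the `α`'s. -/
def LMelem {m : ℕ} (a : Fin m → Fin 2) : Fhat ℝ 2 :=
  ∑ S : Finset (Fin m), ∑ T : Finset (Fin m),
    if (∀ α ∈ S, a α = 0) ∧ (∀ β ∈ T, a β = 1) then
      ((-1 : ℝ) ^ (S.card + T.card)) •
        mulF (powF (delta [(1 : Fin 2)]) T.card)
          (mulF
            (delta ((((List.finRange m).reverse).filter
              (fun α => decide (α ∉ S ∪ T))).map a))
            (powF (delta [(0 : Fin 2)]) S.card))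
    else 0

/-- The Le–Murakami coefficient `C^{a₁,…,a_m}_{i₁,…,i_m}`: since the words of
length `m` form a basis of the degree-`m` part of `F₂`, it is the coefficient
of the word `A_{i_m} ⋯ A_{i_1}` in `LMelem a`. -/
def Ccoef {m : ℕ} (a i : Fin m → Fin 2) : ℝ :=
  LMelem a (List.ofFn fun j => i (Fin.rev j))

section Preliminaries

variable {K : Type} [Field K] [CharZero K] {n : ℕ}

set_option linter.unusedSectionVars false

/-- The value of the functional `X` on the shuffle product of the words `u` and `v`. -/
def shuffleEval {α : Type} (X : List α → K) : List α → List α → K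
  | [], v => X v
  | a :: u, [] => X (a :: u)
  | a :: u, b :: v =>
      shuffleEval (fun w => X (a :: w)) u (b :: v) + shuffleEval (fun w => X (b :: w)) (a :: u) v
termination_by u v => u.length + v.length

section Shuffle

variable {α : Type}

theorem shuffleEval_nil_left (X : List α → K) (v : List α) : shuffleEval X [] v = X v := by
  rw [shuffleEval]

theorem shuffleEval_nil_right (X : List α → K) (u : List α) : shuffleEval X u [] = X u := by
  cases u <;> rw [shuffleEval]

theorem shuffleEval_cons_cons (X : List α → K) (a b : α) (u v : List α) :
    shuffleEval X (a :: u) (b :: v) =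
      shuffleEval (fun w => X (a :: w)) u (b :: v) +
        shuffleEval (fun w => X (b :: w)) (a :: u) v := by
  rw [shuffleEval]

theorem shuffleEval_add (X Y : List α → K) (u v : List α) :
    shuffleEval (fun w => X w + Y w) u v = shuffleEval X u v + shuffleEval Y u v := by
  fun_induction shuffleEval X u v generalizing Y with
  | case1 => simp [shuffleEval_nil_left]
  | case2 => simp [shuffleEval_nil_right]
  | case3 X a u b v ih1 ih2 => simp only [shuffleEval_cons_cons, ih1, ih2]; ring

theorem shuffleEval_const_mul (c : K) (X : List α → K) (u v : List α) :
    shuffleEval (fun w => c * X w) u v = c * shuffleEval X u v := by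
  fun_induction shuffleEval X u v with
  | case1 => simp [shuffleEval_nil_left]
  | case2 => simp [shuffleEval_nil_right]
  | case3 X a u b v ih1 ih2 => simp only [shuffleEval_cons_cons, ih1, ih2]; ring

theorem shuffleEval_congr {X Y : List α → K} {u v : List α}
    (h : ∀ w, w.length = u.length + v.length → X w = Y w) :
    shuffleEval X u v = shuffleEval Y u v := by
  fun_induction shuffleEval X u v generalizing Y with
  | case1 => simpa [shuffleEval_nil_left] using h _ (by simp)
  | case2 => simpa [shuffleEval_nil_right] using h _ (by simp)
  | case3 X a u b v ih1 ih2 =>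
    rw [shuffleEval_cons_cons, ih1, ih2]
    · intro w hw
      exact h _ (by simp at hw ⊢; omega)
    · intro w hw
      exact h _ (by simp at hw ⊢; omega)

theorem shuffleEval_comp_map {β : Type} (φ : β → α) (X : List α → K) (u v : List β) :
    shuffleEval (fun w => X (w.map φ)) u v = shuffleEval X (u.map φ) (v.map φ) := by
  generalize hY : (fun w : List β => X (w.map φ)) = Y
  fun_induction shuffleEval Y u v generalizing X with
  | case1 => subst hY; simp [shuffleEval_nil_left]
  | case2 => subst hY; simp [shuffleEval_nil_right]
  | case3 Y a u b v ih1 ih2 =>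
    subst hY
    rw [List.map_cons, List.map_cons, shuffleEval_cons_cons,
      ih1 (fun w => X (φ a :: w)) (by simp), ih2 (fun w => X (φ b :: w)) (by simp)]
    simp

theorem shuffleEval_singleton_cons (c b : α) (X : List α → K) (w : List α) :
    shuffleEval X [c] (b :: w) = X (c :: b :: w) + shuffleEval (fun w => X (b :: w)) [c] w := by
  rw [shuffleEval_cons_cons, shuffleEval_nil_left]

/-- `X` takes the value `1` on the empty word and is multiplicative for the shuffle product. -/
def IsShuffleChar (X : List α → K) : Prop :=
  X [] = 1 ∧ ∀ u v, X u * X v = shuffleEval X u v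

end Shuffle

theorem mulF_nil (f g : Fhat K n) : mulF f g [] = f [] * g [] := by
  simp [mulF]

theorem mulF_cons (f g : Fhat K n) (a : Fin n) (w : List (Fin n)) :
    mulF f g (a :: w) = f [] * g (a :: w) + mulF (fun w => f (a :: w)) g w := by
  simp only [mulF, List.length_cons]
  rw [Finset.sum_range_succ']
  simp [add_comm]

theorem shuffleEval_mulF (X Y : Fhat K n) (u v : List (Fin n)) :
    shuffleEval (mulF X Y) u v =
      ∑ i ∈ range (u.length + 1), ∑ j ∈ range (v.length + 1),
        shuffleEval X (u.take i) (v.take j) * shuffleEval Y (u.drop i) (v.drop j) := by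
  fun_induction shuffleEval X u v with
  | case1 => simp [shuffleEval_nil_left, mulF]
  | case2 => simp [shuffleEval_nil_right, mulF]
  | case3 X a u b v ih1 ih2 =>
    have h (c : Fin n) : (fun w => mulF X Y (c :: w)) =
        fun w => X [] * Y (c :: w) + mulF (fun w => X (c :: w)) Y w := by
      funext w
      rw [mulF_cons]
    rw [shuffleEval_cons_cons, h, h, shuffleEval_add, shuffleEval_add, shuffleEval_const_mul,
      shuffleEval_const_mul]
    erw [ih1, ih2]
    simp only [List.length_cons]
    conv_rhs => rw [Finset.sum_range_succ']
    conv_lhs =>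
      enter [2, 2]
      rw [Finset.sum_range_succ']
    simp only [Finset.sum_range_succ' _ (v.length + 1)]
    simp only [List.take_succ_cons, List.drop_succ_cons, List.take_zero, List.drop_zero,
      shuffleEval_cons_cons, shuffleEval_nil_left, shuffleEval_nil_right, add_mul,
      Finset.sum_add_distrib]
    ring

theorem oneF_isShuffleChar : IsShuffleChar (oneF : Fhat K n) := by
  refine ⟨by simp [oneF], fun u v => ?_⟩
  rcases u with _ | ⟨a, u⟩
  · simp [oneF, shuffleEval_nil_left]
  · rcases v with _ | ⟨b, v⟩
    · simp [oneF, shuffleEval_nil_right]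
    · rw [shuffleEval_congr (Y := fun w => 0 * (0 : K)) (by
        rintro (_ | ⟨c, w⟩) hw
        · simp at hw
        · simp [oneF]), shuffleEval_const_mul]
      simp [oneF]

theorem shuffle_defect_mulF_right {X Y : Fhat K n} (hY : IsShuffleChar Y) (u v : List (Fin n))
    (h : ∀ u' v', u'.length + v'.length < u.length + v.length →
      X u' * X v' = shuffleEval X u' v') :
    mulF X Y u * mulF X Y v - shuffleEval (mulF X Y) u v = X u * X v - shuffleEval X u v := by
  rw [shuffleEval_mulF, mulF, mulF, Finset.sum_mul_sum, ← Finset.sum_sub_distrib]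
  simp_rw [← Finset.sum_sub_distrib]
  have key : ∀ i ∈ range (u.length + 1), ∀ j ∈ range (v.length + 1),
      ¬ (i = u.length ∧ j = v.length) →
      X (u.take i) * Y (u.drop i) * (X (v.take j) * Y (v.drop j)) -
        shuffleEval X (u.take i) (v.take j) * shuffleEval Y (u.drop i) (v.drop j) = 0 := by
    intro i hi j hj hij
    rw [← h, ← hY.2]
    · ring
    · simp at hi hj ⊢
      omega
  rw [Finset.sum_eq_single u.length, Finset.sum_eq_single v.length]
  · simp [shuffleEval_nil_left, hY.1]
  · intro j hj hne
    exact key _ (by simp) j hj (by tauto)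
  · simp
  · intro i hi hne
    exact Finset.sum_eq_zero fun j hj => key i hi j hj (by tauto)
  · simp

theorem isShuffleChar_of_mulF_left {X Y : Fhat K n} (hX : IsShuffleChar X)
    (hXY : IsShuffleChar (mulF X Y)) : IsShuffleChar Y := by
  refine ⟨by simpa [mulF_nil, hX.1] using hXY.1, fun u v => ?_⟩
  induction hN : u.length + v.length using Nat.strong_induction_on generalizing u v with
  | _ N ih =>
  subst hN
  have h0 := hXY.2 u v
  rw [← sub_eq_zero, shuffleEval_mulF, mulF, mulF, Finset.sum_mul_sum,
    ← Finset.sum_sub_distrib] at h0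
  simp_rw [← Finset.sum_sub_distrib] at h0
  have key : ∀ i ∈ range (u.length + 1), ∀ j ∈ range (v.length + 1),
      ¬ (i = 0 ∧ j = 0) →
      X (u.take i) * Y (u.drop i) * (X (v.take j) * Y (v.drop j)) -
        shuffleEval X (u.take i) (v.take j) * shuffleEval Y (u.drop i) (v.drop j) = 0 := by
    intro i hi j hj hij
    rw [← hX.2, ← ih _ _ _ _ rfl]
    · ring
    · simp at hi hj ⊢
      omega
  rw [Finset.sum_eq_single 0, Finset.sum_eq_single 0] at h0
  · simpa [shuffleEval_nil_left, hX.1, sub_eq_zero] using h0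
  · intro j hj hne
    exact key _ (by simp) j hj (by tauto)
  · simp
  · intro i hi hne
    exact Finset.sum_eq_zero fun j hj => key i hi j hj (by tauto)
  · simp

theorem delta_mulF_cons (a : Fin n) (f : Fhat K n) (b : Fin n) (w : List (Fin n)) :
    mulF (delta [a]) f (b :: w) = if b = a then f w else 0 := by
  have h : mulF (delta [a]) f (b :: w) =
      mulF (fun w => if b = a then oneF w else 0) f w := by
    rw [mulF_cons]
    have : (delta [a] : Fhat K n) [] = 0 := by simp [delta]
    rw [this, zero_mul, zero_add]
    congr 1
    funext w
    by_cases hb : b = a <;> simp [delta, oneF, hb]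
  rw [h, mulF, Finset.sum_eq_single 0]
  · simp [oneF]
  · intro i hi h0
    have : w.take i ≠ [] := by
      simp at hi ⊢
      refine ⟨h0, ?_⟩
      rintro rfl
      simp at hi
      exact h0 hi
    simp [oneF, this]
  · simp

theorem oneF_mulF (f : Fhat K n) : mulF oneF f = f := by
  funext w
  rcases w with _ | ⟨a, w⟩
  · simp [mulF_nil, oneF]
  · rw [mulF_cons]
    simp [oneF, mulF]

theorem smul_mulF (c : K) (f g : Fhat K n) : mulF (c • f) g = c • mulF f g := by
  funext w
  simp [mulF, Finset.mul_sum, mul_assoc]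

theorem powF_smul_delta (c : K) (a : Fin n) (k : ℕ) :
    powF (c • delta [a]) k = c ^ k • (delta (List.replicate k a) : Fhat K n) := by
  induction k with
  | zero =>
    funext w
    simp [powF, oneF, delta]
  | succ k ih =>
    funext w
    rw [powF, ih, smul_mulF]
    rcases w with _ | ⟨b, w⟩
    · simp [mulF_nil, delta, List.replicate_succ]
    · rw [Pi.smul_apply, delta_mulF_cons]
      by_cases hb : b = a <;> simp [delta, List.replicate_succ, hb, pow_succ']

theorem expF_smul_delta (c : K) (a : Fin n) (w : List (Fin n)) :
    expF (c • delta [a]) w =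
      if w = List.replicate w.length a then (w.length.factorial : K)⁻¹ * c ^ w.length else 0 := by
  simp only [expF, powF_smul_delta, Pi.smul_apply, delta, smul_eq_mul]
  rw [Finset.sum_eq_single w.length]
  · split_ifs <;> simp
  · intro k _ hk
    rw [if_neg, mul_zero, mul_zero]
    rintro rfl
    simp at hk
  · simp

theorem expF_smul_delta_nil (c : K) (a : Fin n) : (expF (c • delta [a]) : Fhat K n) [] = 1 := by
  simp [expF_smul_delta]

theorem expF_smul_delta_cons (c : K) (a b : Fin n) (w : List (Fin n)) :
    ((w.length : K) + 1) * expF (c • delta [a]) (b :: w) =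
      (if b = a then c else 0) * expF (c • delta [a]) w := by
  have h1 : ((w.length : K) + 1) ≠ 0 := Nat.cast_add_one_ne_zero _
  have h2 : (w.length.factorial : K) ≠ 0 := Nat.cast_ne_zero.mpr (Nat.factorial_ne_zero _)
  rw [expF_smul_delta, expF_smul_delta]
  by_cases hb : b = a
  · by_cases hw : w = List.replicate w.length a
    · have : b :: w = List.replicate (b :: w).length a := by
        rw [List.length_cons, List.replicate_succ, ← hw, hb]
      rw [if_pos this, if_pos hb, if_pos hw]
      simp only [List.length_cons, Nat.factorial_succ, Nat.cast_mul, Nat.cast_add, Nat.cast_one]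
      field_simp
      ring
    · have : ¬ b :: w = List.replicate (b :: w).length a := by
        rw [List.length_cons, List.replicate_succ]
        simp [hw]
      rw [if_neg this, if_neg hw]
      simp
  · have : ¬ b :: w = List.replicate (b :: w).length a := by
      rw [List.length_cons, List.replicate_succ]
      simp [hb]
    rw [if_neg this, if_neg hb]
    simp

theorem expF_smul_delta_isShuffleChar (c : K) (a : Fin n) :
    IsShuffleChar (expF (c • delta [a]) : Fhat K n) := by
  refine ⟨expF_smul_delta_nil c a, fun u v => ?_⟩
  induction hN : u.length + v.length using Nat.strong_induction_on generalizing u v with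
  | _ N ih =>
  subst hN
  rcases u with _ | ⟨b, u⟩
  · simp [shuffleEval_nil_left, expF_smul_delta_nil]
  rcases v with _ | ⟨b', v⟩
  · simp [shuffleEval_nil_right, expF_smul_delta_nil]
  have hpos : ((u.length + v.length + 1 : ℕ) : K) + 1 ≠ 0 :=
    Nat.cast_add_one_ne_zero _
  apply mul_left_cancel₀ hpos
  rw [shuffleEval_cons_cons, mul_add, ← shuffleEval_const_mul, ← shuffleEval_const_mul]
  have hcongr (d : Fin n) (u' v' : List (Fin n))
      (h : u'.length + v'.length = u.length + v.length + 1) :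
      shuffleEval (fun w => (((u.length + v.length + 1 : ℕ) : K) + 1) *
          expF (c • delta [a]) (d :: w)) u' v' =
        (if d = a then c else 0) * shuffleEval (expF (c • delta [a])) u' v' := by
    rw [← shuffleEval_const_mul]
    apply shuffleEval_congr
    intro w hw
    rw [← expF_smul_delta_cons, hw, h]
  rw [hcongr b u (b' :: v) (by simp; omega), hcongr b' (b :: u) v (by simp; omega),
    ← ih _ _ _ _ rfl, ← ih _ _ _ _ rfl]
  · have e1 := expF_smul_delta_cons c a b u
    have e2 := expF_smul_delta_cons c a b' v
    push_cast
    linear_combination expF (c • delta [a]) (b' :: v) * e1 + expF (c • delta [a]) (b :: u) * e2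
  · simp
  · simp

section LeMurakami

/-- Number of letters `c` marked for extraction. -/
def numMarked (c : Fin 2) (l : List (Fin 2 × Bool)) : ℕ := l.count (c, true)

/-- The subword of unmarked letters. -/
def unmarked (l : List (Fin 2 × Bool)) : List (Fin 2) := (l.filter fun x => !x.2).map Prod.fst

/-- The value of `X` on the shuffle of `1^j`, `u` and `0^k`, as a sum over marked words of
length `m`. -/
def markedSum (m : ℕ) (X : List (Fin 2) → K) (j : ℕ) (u : List (Fin 2)) (k : ℕ) : K :=
  ∑ c : Fin m → Fin 2 × Bool,
    if numMarked 1 (List.ofFn c) = j ∧ unmarked (List.ofFn c) = u ∧ numMarked 0 (List.ofFn c) = k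
    then X ((List.ofFn c).map Prod.fst) else 0

theorem sum_fin_succ_fun {β M : Type} [Fintype β] [AddCommMonoid M] (m : ℕ)
    (F : (Fin (m + 1) → β) → M) :
    ∑ c, F c = ∑ b : β, ∑ c : Fin m → β, F (Fin.cons b c) := by
  rw [← (Fin.consEquiv fun _ : Fin (m + 1) => β).sum_comp, Fintype.sum_prod_type]
  rfl

theorem sum_fin_succ_fun' {β M : Type} [Fintype β] [AddCommMonoid M] (m : ℕ)
    (F : (Fin (m + 1) → β) → M) :
    ∑ c, F c = ∑ b : β, ∑ c : Fin m → β, F (Fin.snoc c b) := by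
  rw [← (Fin.snocEquiv fun _ : Fin (m + 1) => β).sum_comp, Fintype.sum_prod_type]
  rfl

theorem markedSum_zero (X : List (Fin 2) → K) (j : ℕ) (u : List (Fin 2)) (k : ℕ) :
    markedSum 0 X j u k = if j = 0 ∧ u = [] ∧ k = 0 then X [] else 0 := by
  simp [markedSum, numMarked, unmarked, eq_comm]

theorem markedSum_succ (m : ℕ) (X : List (Fin 2) → K) (j : ℕ) (u : List (Fin 2)) (k : ℕ) :
    markedSum (m + 1) X j u k =
      (match u with
        | [] => 0
        | b :: u' => markedSum m (fun w => X (b :: w)) j u' k) +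
      (match j with
        | 0 => 0
        | j' + 1 => markedSum m (fun w => X (1 :: w)) j' u k) +
      (match k with
        | 0 => 0
        | k' + 1 => markedSum m (fun w => X (0 :: w)) j u k') := by
  rw [markedSum, sum_fin_succ_fun, Fintype.sum_prod_type]
  simp only [Fintype.sum_bool, Fin.sum_univ_two, List.ofFn_cons, numMarked, unmarked,
    List.count_cons, List.filter_cons, List.map_cons]
  have h1 : (∑ c : Fin m → Fin 2 × Bool,
      if numMarked 1 (List.ofFn c) + 1 = j ∧ unmarked (List.ofFn c) = u ∧
        numMarked 0 (List.ofFn c) = k then X (1 :: (List.ofFn c).map Prod.fst) else 0) =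
      (match (generalizing := false) j with
        | 0 => 0
        | j' + 1 => markedSum m (fun w => X (1 :: w)) j' u k) := by
    cases j <;> simp [markedSum]
  have h2 : (∑ c : Fin m → Fin 2 × Bool,
      if numMarked 1 (List.ofFn c) = j ∧ unmarked (List.ofFn c) = u ∧
        numMarked 0 (List.ofFn c) + 1 = k then X (0 :: (List.ofFn c).map Prod.fst) else 0) =
      (match (generalizing := false) k with
        | 0 => 0
        | k' + 1 => markedSum m (fun w => X (0 :: w)) j u k') := by
    cases k <;> simp [markedSum]
  have h3 : (∑ b : Fin 2, ∑ c : Fin m → Fin 2 × Bool,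
      if numMarked 1 (List.ofFn c) = j ∧ b :: unmarked (List.ofFn c) = u ∧
        numMarked 0 (List.ofFn c) = k then X (b :: (List.ofFn c).map Prod.fst) else 0) =
      (match (generalizing := false) u with
        | [] => 0
        | b :: u' => markedSum m (fun w => X (b :: w)) j u' k) := by
    rcases u with _ | ⟨b, u⟩
    · simp
    · fin_cases b <;> simp [markedSum]
  rw [← h1, ← h2, ← h3, Fin.sum_univ_two]
  simp [numMarked, unmarked]
  ring

theorem markedSum_add (m : ℕ) (X Y : List (Fin 2) → K) (j : ℕ) (u : List (Fin 2)) (k : ℕ) :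
    markedSum m (fun w => X w + Y w) j u k = markedSum m X j u k + markedSum m Y j u k := by
  simp only [markedSum, ← Finset.sum_add_distrib]
  exact Finset.sum_congr rfl fun c _ => by split_ifs <;> simp

theorem markedSum_shuffle_one (m : ℕ) (X : List (Fin 2) → K) (j : ℕ) (u : List (Fin 2)) (k : ℕ) :
    markedSum m (shuffleEval X [1]) j u k = ((j : K) + 1) * markedSum (m + 1) X (j + 1) u k := by
  induction m generalizing X j u k with
  | zero =>
    rw [markedSum_succ]
    rcases u with _ | ⟨b, u⟩ <;> rcases k with _ | k <;> rcases j with _ | j <;>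
      simp [markedSum_zero, shuffleEval_nil_right]
  | succ m ih =>
    have h0 : ∀ b : Fin 2, (fun w => shuffleEval X [1] (b :: w)) =
        fun w => X (1 :: b :: w) + shuffleEval (fun w => X (b :: w)) [1] w := by
      intro b
      funext w
      rw [shuffleEval_singleton_cons]
    rw [markedSum_succ, markedSum_succ (m + 1)]
    have h1 := markedSum_succ m (fun w => X (1 :: w)) j u k
    simp only [h0, markedSum_add, ih]
    rcases u with _ | ⟨b, u⟩ <;> rcases k with _ | k <;> rcases j with _ | j <;>
      simp at h1 ⊢ <;> rw [h1] <;> ring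

theorem markedSum_shuffle_zero (m : ℕ) (X : List (Fin 2) → K) (j : ℕ) (u : List (Fin 2)) (k : ℕ) :
    markedSum m (shuffleEval X [0]) j u k = ((k : K) + 1) * markedSum (m + 1) X j u (k + 1) := by
  induction m generalizing X j u k with
  | zero =>
    rw [markedSum_succ]
    rcases u with _ | ⟨b, u⟩ <;> rcases k with _ | k <;> rcases j with _ | j <;>
      simp [markedSum_zero, shuffleEval_nil_right]
  | succ m ih =>
    have h0 : ∀ b : Fin 2, (fun w => shuffleEval X [0] (b :: w)) =
        fun w => X (0 :: b :: w) + shuffleEval (fun w => X (b :: w)) [0] w := by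
      intro b
      funext w
      rw [shuffleEval_singleton_cons]
    rw [markedSum_succ, markedSum_succ (m + 1)]
    have h1 := markedSum_succ m (fun w => X (0 :: w)) j u k
    simp only [h0, markedSum_add, ih]
    rcases u with _ | ⟨b, u⟩ <;> rcases k with _ | k <;> rcases j with _ | j <;>
      simp at h1 ⊢ <;> rw [h1] <;> ring

theorem markedSum_zero_zero (X : List (Fin 2) → K) (u : List (Fin 2)) :
    markedSum u.length X 0 u 0 = X u := by
  induction u generalizing X with
  | nil => simp [markedSum_zero]
  | cons b u ih => simp [markedSum_succ, ih]

theorem markedSum_eq_zero {X : List (Fin 2) → K} (hX : IsShuffleChar X) (h0 : X [0] = 0)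
    (h1 : X [1] = 0) (m j : ℕ) (u : List (Fin 2)) (k : ℕ) (hjk : j ≠ 0 ∨ k ≠ 0) :
    markedSum m X j u k = 0 := by
  have hz : ∀ c : Fin 2, shuffleEval X [c] = fun _ => 0 := by
    intro c
    funext w
    rw [← hX.2]
    fin_cases c <;> simp [h0, h1]
  rcases m with _ | m
  · rw [markedSum_zero, if_neg]
    tauto
  · rcases hjk with h | h
    · obtain ⟨j, rfl⟩ := Nat.exists_eq_succ_of_ne_zero h
      have := markedSum_shuffle_one m X j u k
      rw [hz] at this
      have hj : ((j : K) + 1) ≠ 0 := Nat.cast_add_one_ne_zero j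
      simpa [markedSum, hj] using this.symm
    · obtain ⟨k, rfl⟩ := Nat.exists_eq_succ_of_ne_zero h
      have := markedSum_shuffle_zero m X j u k
      rw [hz] at this
      have hk : ((k : K) + 1) ≠ 0 := Nat.cast_add_one_ne_zero k
      simpa [markedSum, hk] using this.symm

/-- The coefficient of the word `w` in the term of `LMelem` attached to a marked word. -/
def leMurakamiTerm (w : List (Fin 2)) (l : List (Fin 2 × Bool)) : ℝ :=
  if List.replicate (numMarked 1 l) 1 ++ (unmarked l ++ List.replicate (numMarked 0 l) 0) = w then
    (-1) ^ (numMarked 0 l + numMarked 1 l) else 0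

theorem delta_mulF_delta (u v : List (Fin n)) :
    mulF (delta u) (delta v) = (delta (u ++ v) : Fhat K n) := by
  induction u with
  | nil =>
    have : (delta [] : Fhat K n) = oneF := rfl
    rw [this, oneF_mulF, List.nil_append]
  | cons a u ih =>
    funext w
    rcases w with _ | ⟨b, w⟩
    · simp [mulF_nil, delta]
    · rw [mulF_cons]
      have hz : (delta (a :: u) : Fhat K n) [] = 0 := by simp [delta]
      rw [hz, zero_mul, zero_add]
      by_cases hb : b = a
      · have : (fun w => delta (a :: u) (b :: w) : Fhat K n) = delta u := by
          funext w
          simp [delta, hb]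
        rw [this, ih]
        simp [delta, hb]
      · have : (fun w => delta (a :: u) (b :: w) : Fhat K n) = fun _ => 0 := by
          funext w
          simp [delta, hb]
        rw [this]
        simp [delta, hb, mulF]

theorem powF_delta (a : Fin n) (k : ℕ) :
    powF (delta [a]) k = (delta (List.replicate k a) : Fhat K n) := by
  simpa using powF_smul_delta (1 : K) a k

theorem card_filter_univ_eq_count {m : ℕ} (f : Fin m → Fin 2 × Bool) (b : Fin 2 × Bool) :
    (univ.filter fun i => f i = b).card = (((List.finRange m).reverse).map f).count b := by
  rw [List.map_reverse, List.count_reverse, List.count_eq_countP, List.countP_map,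
    List.countP_eq_length_filter]
  rw [← Multiset.coe_card, Finset.card_def, Finset.filter_val]
  congr 1
  simp [Fin.univ_def, Function.comp_def, beq_eq_decide]

theorem LMelem_apply {m : ℕ} (a : Fin m → Fin 2) (w : List (Fin 2)) :
    LMelem a w = ∑ r : Fin m → Bool,
      leMurakamiTerm w (List.ofFn fun j => (a (Fin.rev j), r j)) := by
  rw [← (Equiv.arrowCongr Fin.revPerm (Equiv.refl Bool)).sum_comp]
  have hl (r : Fin m → Bool) :
      (List.ofFn fun j => (a (Fin.rev j),
        (Equiv.arrowCongr Fin.revPerm (Equiv.refl Bool)) r j)) =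
      ((List.finRange m).reverse).map fun α => (a α, r α) := by
    rw [List.finRange_reverse, List.map_map, List.ofFn_eq_map]
    rfl
  simp_rw [hl]
  rw [LMelem, Finset.sum_apply]
  simp_rw [Finset.sum_apply]
  rw [← Fintype.sum_prod_type']
  rw [← Finset.sum_filter_of_ne (p := fun x : Finset (Fin m) × Finset (Fin m) =>
    (∀ α ∈ x.1, a α = 0) ∧ (∀ β ∈ x.2, a β = 1))]
  · refine Finset.sum_bij' (fun x _ => fun α => decide (α ∈ x.1 ∪ x.2))
      (fun r _ => (univ.filter fun α => (a α, r α) = (0, true),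
        univ.filter fun α => (a α, r α) = (1, true))) ?_ ?_ ?_ ?_ ?_
    · simp
    · intro r _
      simp
      tauto
    · rintro ⟨S, T⟩ hx
      simp at hx
      ext α
      · simp
        constructor
        · rintro ⟨h0, h | h⟩
          · exact h
          · simp [hx.2 α h] at h0
        · intro h
          exact ⟨hx.1 α h, Or.inl h⟩
      · simp
        constructor
        · rintro ⟨h0, h | h⟩
          · simp [hx.1 α h] at h0
          · exact h
        · intro h
          exact ⟨hx.2 α h, Or.inr h⟩
    · intro r _
      funext α
      simp
      have : a α = 0 ∨ a α = 1 := by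
        generalize a α = b
        fin_cases b <;> simp
      cases r α <;> simp [this]
    · rintro ⟨S, T⟩ hx
      simp only [mem_filter, mem_univ, true_and] at hx
      rw [if_pos hx]
      have hS : (univ.filter fun α => (a α, decide (α ∈ S ∪ T)) = (0, true)) = S := by
        ext α
        simp
        constructor
        · rintro ⟨h0, h | h⟩
          · exact h
          · simp [hx.2 α h] at h0
        · intro h
          exact ⟨hx.1 α h, Or.inl h⟩
      have hT : (univ.filter fun α => (a α, decide (α ∈ S ∪ T)) = (1, true)) = T := by
        ext α
        simp
        constructor
        · rintro ⟨h0, h | h⟩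
          · simp [hx.1 α h] at h0
          · exact h
        · intro h
          exact ⟨hx.2 α h, Or.inr h⟩
      have hu : unmarked (((List.finRange m).reverse).map fun α => (a α, decide (α ∈ S ∪ T))) =
          (((List.finRange m).reverse).filter (fun α => decide (α ∉ S ∪ T))).map a := by
        rw [unmarked, List.filter_map, List.map_map]
        congr 1
        apply List.filter_congr
        simp
      rw [leMurakamiTerm, hu, numMarked, numMarked, ← card_filter_univ_eq_count,
        ← card_filter_univ_eq_count, hS, hT]
      rw [powF_delta, powF_delta, delta_mulF_delta, delta_mulF_delta]
      simp [delta, eq_comm]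
  · rintro ⟨S, T⟩ _ h
    by_contra h'
    rw [if_neg h'] at h
    exact h rfl

theorem LMelem_eq_zero_of_last {m : ℕ} (a : Fin (m + 1) → Fin 2) (ha : a (Fin.last m) = 1) :
    LMelem a = 0 := by
  funext w
  rw [LMelem_apply, sum_fin_succ_fun, Fintype.sum_bool, ← Finset.sum_add_distrib]
  refine Finset.sum_eq_zero fun r _ => ?_
  simp only [List.ofFn_succ, Fin.rev_zero, ha, Fin.cons_zero, Fin.cons_succ]
  simp [leMurakamiTerm, numMarked, unmarked, List.replicate_succ', pow_succ, ← add_assoc]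
  split_ifs <;> simp

theorem LMelem_eq_zero_of_first {m : ℕ} (a : Fin (m + 1) → Fin 2) (ha : a 0 = 0) :
    LMelem a = 0 := by
  funext w
  rw [LMelem_apply, sum_fin_succ_fun', Fintype.sum_bool, ← Finset.sum_add_distrib]
  refine Finset.sum_eq_zero fun r _ => ?_
  simp only [List.ofFn_succ', Fin.rev_last, ha, Fin.snoc_last, Fin.snoc_castSucc,
    List.concat_eq_append]
  simp [leMurakamiTerm, numMarked, unmarked, List.replicate_succ, pow_succ, add_right_comm _ 1]
  split_ifs <;> simp

theorem sum_mul_LMelem {X : List (Fin 2) → ℝ} (hX : IsShuffleChar X) (h0 : X [0] = 0)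
    (h1 : X [1] = 0) {m : ℕ} (w : List (Fin 2)) (hw : w.length = m) :
    ∑ a : Fin m → Fin 2, X (List.ofFn fun j => a (Fin.rev j)) * LMelem a w = X w := by
  subst hw
  simp_rw [LMelem_apply]
  rw [← (Equiv.arrowCongr Fin.revPerm (Equiv.refl (Fin 2))).sum_comp]
  simp_rw [Finset.mul_sum]
  rw [← Fintype.sum_prod_type', ← (Equiv.arrowProdEquivProdArrow _ _ _).sum_comp]
  have hc (c : Fin w.length → Fin 2 × Bool) :
      X (List.ofFn fun j => (Equiv.arrowCongr Fin.revPerm (Equiv.refl (Fin 2)))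
          ((Equiv.arrowProdEquivProdArrow _ _ _) c).1 (Fin.rev j)) *
        leMurakamiTerm w (List.ofFn fun j =>
          ((Equiv.arrowCongr Fin.revPerm (Equiv.refl (Fin 2)))
            ((Equiv.arrowProdEquivProdArrow _ _ _) c).1 (Fin.rev j),
            ((Equiv.arrowProdEquivProdArrow _ _ _) c).2 j)) =
      X ((List.ofFn c).map Prod.fst) * leMurakamiTerm w (List.ofFn c) := by
    rw [List.map_ofFn]
    simp [Equiv.arrowCongr, Equiv.arrowProdEquivProdArrow, Function.comp_def]
  rw [Finset.sum_congr rfl fun c _ => hc c]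
  classical
  let g : (Fin w.length → Fin 2 × Bool) → ℕ × List (Fin 2) × ℕ := fun c =>
    (numMarked 1 (List.ofFn c), unmarked (List.ofFn c), numMarked 0 (List.ofFn c))
  let F : ℕ × List (Fin 2) × ℕ → ℝ := fun t =>
    if List.replicate t.1 1 ++ (t.2.1 ++ List.replicate t.2.2 0) = w then
      (-1) ^ (t.2.2 + t.1) else 0
  have hF : ∀ c, leMurakamiTerm w (List.ofFn c) = F (g c) := fun c => rfl
  have hM (t : ℕ × List (Fin 2) × ℕ) : (∑ c with g c = t, X ((List.ofFn c).map Prod.fst)) =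
      markedSum w.length X t.1 t.2.1 t.2.2 := by
    rw [Finset.sum_filter, markedSum]
    simp [g, Prod.ext_iff]
  rw [← Finset.sum_fiberwise_of_maps_to (s := univ) (t := insert (0, w, 0) (univ.image g)) (g := g)
    (by simp)]
  have hS (t : ℕ × List (Fin 2) × ℕ) :
      (∑ c with g c = t, X ((List.ofFn c).map Prod.fst) * leMurakamiTerm w (List.ofFn c)) =
      markedSum w.length X t.1 t.2.1 t.2.2 * F t := by
    rw [← hM, Finset.sum_mul]
    refine Finset.sum_congr rfl fun c hc => ?_
    rw [hF, (Finset.mem_filter.mp hc).2]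
  simp_rw [hS]
  rw [Finset.sum_eq_single (0, w, 0)]
  · simp [markedSum_zero_zero, F]
  · rintro ⟨j, u, k⟩ _ hne
    by_cases hjk : j ≠ 0 ∨ k ≠ 0
    · rw [markedSum_eq_zero hX h0 h1 _ _ _ _ hjk, zero_mul]
    · push Not at hjk
      obtain ⟨rfl, rfl⟩ := hjk
      have : u ≠ w := by
        rintro rfl
        exact hne rfl
      simp [F, this]
  · simp

end LeMurakami

section CBH

theorem mulF_congr {f f' g g' : Fhat K n} {v : List (Fin n)}
    (hf : ∀ u, u.Sublist v → f u = f' u) (hg : ∀ u, u.Sublist v → g u = g' u) :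
    mulF f g v = mulF f' g' v :=
  Finset.sum_congr rfl fun i _ => by
    rw [hf _ (List.take_sublist i v), hg _ (List.drop_sublist i v)]

theorem powF_congr {f g : Fhat K n} {v : List (Fin n)} (k : ℕ)
    (h : ∀ u, u.Sublist v → f u = g u) : powF f k v = powF g k v := by
  induction k generalizing v with
  | zero => rfl
  | succ k ih => exact mulF_congr h fun u hu => ih fun u' hu' => h u' (hu'.trans hu)

theorem powF_map {m : ℕ} (φ : Fin m → Fin n) (f : Fhat K n) (k : ℕ) (u : List (Fin m)) :
    powF f k (u.map φ) = powF (fun w => f (w.map φ)) k u := by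
  induction k generalizing u with
  | zero => simp [powF, oneF]
  | succ k ih => simp [powF, mulF, ← List.map_take, ← List.map_drop, ih]

/-- The permutations of the letters of `u ++ v` containing both `u` and `v` as subwords. -/
def shuffles (u v : List (Fin n)) : Finset (List (Fin n)) :=
  (u ++ v).permutations.toFinset.filter fun w => u.Sublist w ∧ v.Sublist w

theorem mem_shuffles {u v w : List (Fin n)} :
    w ∈ shuffles u v ↔ w.Perm (u ++ v) ∧ u.Sublist w ∧ v.Sublist w := by
  simp [shuffles]

theorem shuffles_cons_cons {a b : Fin n} {u v : List (Fin n)} (h : ((a :: u) ++ (b :: v)).Nodup) :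
    shuffles (a :: u) (b :: v) =
      (shuffles u (b :: v)).image (List.cons a) ∪ (shuffles (a :: u) v).image (List.cons b) := by
  have hab : a ≠ b := by
    rintro rfl
    simp at h
  have hperm : (a :: u ++ b :: v).Perm (b :: (a :: u ++ v)) := List.perm_middle
  ext w
  simp only [mem_union, mem_image, mem_shuffles]
  constructor
  · rintro ⟨hw, hu, hv⟩
    rcases w with _ | ⟨c, w⟩
    · simp at hu
    by_cases hca : c = a
    · subst hca
      left
      refine ⟨w, ⟨?_, List.cons_sublist_cons.mp hu, ?_⟩, rfl⟩
      · simpa using hw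
      · exact hv.of_cons_of_ne hab.symm
    by_cases hcb : c = b
    · subst hcb
      right
      refine ⟨w, ⟨?_, hu.of_cons_of_ne (Ne.symm hca), List.cons_sublist_cons.mp hv⟩, rfl⟩
      exact (hw.trans hperm).cons_inv
    · exfalso
      have hn : (c :: w).Nodup := hw.nodup_iff.mpr h
      have hu' := hu.of_cons_of_ne (Ne.symm hca)
      have hv' := hv.of_cons_of_ne (Ne.symm hcb)
      have hc : c ∈ a :: u ++ b :: v := hw.subset (by simp)
      rw [List.mem_append] at hc
      exact (List.nodup_cons.mp hn).1 (hc.elim (fun h => hu'.subset h) (fun h => hv'.subset h))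
  · rintro (⟨w, ⟨hw, hu, hv⟩, rfl⟩ | ⟨w, ⟨hw, hu, hv⟩, rfl⟩)
    · exact ⟨by simpa using hw, hu.cons_cons a, hv.cons a⟩
    · exact ⟨(hw.cons b).trans hperm.symm, hu.cons b, hv.cons_cons b⟩

theorem shuffleEval_eq_sum (X : Fhat K n) (u v : List (Fin n)) (h : (u ++ v).Nodup) :
    shuffleEval X u v = ∑ w ∈ shuffles u v, X w := by
  fun_induction shuffleEval X u v with
  | case1 X v =>
    have : shuffles [] v = {v} := by
      ext w
      simp only [mem_shuffles, List.nil_append, mem_singleton]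
      exact ⟨fun hw => (hw.2.2.eq_of_length hw.1.length_eq.symm).symm, by rintro rfl; simp⟩
    simp [this]
  | case2 X a u =>
    have : shuffles (a :: u) [] = {a :: u} := by
      ext w
      simp only [mem_shuffles, List.append_nil, mem_singleton]
      exact ⟨fun hw => (hw.2.1.eq_of_length hw.1.length_eq.symm).symm, by rintro rfl; simp⟩
    simp [this]
  | case3 X a u b v ih1 ih2 =>
    have hab : a ≠ b := by
      rintro rfl
      simp at h
    rw [shuffles_cons_cons h, Finset.sum_union, Finset.sum_image, Finset.sum_image, ih1, ih2]
    · exact (List.perm_middle.nodup_iff.mp h).of_cons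
    · exact h.of_cons
    · simp
    · simp
    · rw [Finset.disjoint_left]
      simp [hab.symm]

/-- The series whose coefficient at a word is `1` or `0` according to whether it is a subword of
`w`. -/
def subwordInd (w : List (Fin n)) : Fhat K n := fun u => if u.Sublist w then 1 else 0

theorem filter_mem_right_append {u v : List (Fin n)} (h : (u ++ v).Nodup) :
    (u ++ v).filter (fun c => decide (c ∈ v)) = v := by
  have hu : u.filter (fun c => decide (c ∈ v)) = [] := by
    rw [List.filter_eq_nil_iff]
    intro a ha
    simpa using (List.disjoint_of_nodup_append h) ha
  have hv : v.filter (fun c => decide (c ∈ v)) = v := by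
    rw [List.filter_eq_self]
    simp
  rw [List.filter_append, hu, hv, List.nil_append]

theorem fiber_filter_eq_shuffles {u v w : List (Fin n)} (h : (u ++ v).Nodup) (hw : w.Perm v) :
    (((u ++ v).permutations.toFinset.filter fun x => u.Sublist x).filter
      fun x => x.filter (fun c => decide (c ∈ v)) = w) = shuffles u w := by
  ext x
  simp only [mem_filter, List.mem_toFinset, List.mem_permutations, mem_shuffles]
  constructor
  · rintro ⟨⟨h1, h2⟩, h3⟩
    exact ⟨h1.trans (hw.symm.append_left u), h2, h3 ▸ List.filter_sublist⟩
  · rintro ⟨h1, h2, h3⟩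
    have hx : x.Perm (u ++ v) := h1.trans (hw.append_left u)
    refine ⟨⟨hx, h2⟩, ?_⟩
    have h4 := h3.filter (fun c => decide (c ∈ v))
    rw [List.filter_eq_self.mpr (by simpa using fun a ha => hw.subset ha)] at h4
    refine (h4.eq_of_length ?_).symm
    have := (hx.filter (fun c => decide (c ∈ v))).length_eq
    rw [filter_mem_right_append h] at this
    rw [this, hw.length_eq]

theorem powF_subwordInd_filter (w v : List (Fin n)) (k : ℕ) :
    powF (subwordInd w - oneF : Fhat K n) k v =
      powF (subwordInd (w.filter fun c => decide (c ∈ v)) - oneF) k v := by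
  refine powF_congr k fun u hu => ?_
  have : u.Sublist w ↔ u.Sublist (w.filter fun c => decide (c ∈ v)) := by
    refine ⟨fun h => ?_, fun h => h.trans List.filter_sublist⟩
    have h4 := h.filter (fun c => decide (c ∈ v))
    rwa [List.filter_eq_self.mpr (by simpa using fun a ha => hu.subset ha)] at h4
  simp [subwordInd, this]

theorem powF_sub_oneF_of_nodup {X : Fhat K n} (hX : IsShuffleChar X) (k : ℕ) (v : List (Fin n))
    (hv : v.Nodup) :
    powF (X - oneF) k v =
      ∑ w ∈ v.permutations.toFinset, X w * powF (subwordInd w - oneF) k v := by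
  induction k generalizing v with
  | zero =>
    rcases v with _ | ⟨a, v⟩
    · simp [powF, oneF, hX.1]
    · simp [powF, oneF]
  | succ k ih =>
    simp only [powF, mulF, Finset.mul_sum]
    rw [Finset.sum_comm]
    refine Finset.sum_congr rfl fun i hi => ?_
    obtain ⟨v₁, hv₁⟩ : ∃ v₁, v₁ = v.take i := ⟨_, rfl⟩
    obtain ⟨v₂, hv₂⟩ : ∃ v₂, v₂ = v.drop i := ⟨_, rfl⟩
    have hvv : v = v₁ ++ v₂ := by rw [hv₁, hv₂, List.take_append_drop]
    rw [← hv₁, ← hv₂]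
    clear hv₁ hv₂ hi
    subst hvv
    rw [ih _ hv.of_append_right]
    by_cases h1 : v₁ = []
    · simp [h1, oneF, hX.1, subwordInd]
    have e1 : (oneF : Fhat K n) v₁ = 0 := by simp [oneF, h1]
    simp only [Pi.sub_apply, e1, sub_zero, subwordInd]
    simp only [ite_mul, one_mul, zero_mul, mul_ite, mul_zero]
    symm
    rw [← Finset.sum_filter, ← Finset.sum_fiberwise_of_maps_to (t := v₂.permutations.toFinset)
      (g := fun x => x.filter (fun c => decide (c ∈ v₂))), Finset.mul_sum]
    · refine Finset.sum_congr rfl fun w hw => ?_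
      rw [List.mem_toFinset, List.mem_permutations] at hw
      have hn : (v₁ ++ w).Nodup := (hw.append_left v₁).nodup_iff.mpr hv
      rw [← mul_assoc, hX.2, shuffleEval_eq_sum X v₁ w hn, Finset.sum_mul,
        fiber_filter_eq_shuffles hv hw]
      refine Finset.sum_congr rfl fun x hx => ?_
      rw [← fiber_filter_eq_shuffles hv hw, mem_filter] at hx
      have := powF_subwordInd_filter (K := K) x v₂ k
      rw [hx.2] at this
      exact congrArg _ this
    · intro x hx
      simp only [mem_filter, List.mem_toFinset, List.mem_permutations] at hx ⊢
      have := hx.1.filter (fun c => decide (c ∈ v₂))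
      rwa [filter_mem_right_append hv] at this

theorem prodListF_expF_delta (l u : List (Fin n)) (hl : l.Nodup) (hu : u.Nodup) :
    prodListF (l.map fun i => expF (delta [i])) u = (subwordInd l u : K) := by
  induction l generalizing u with
  | nil => simp [prodListF, subwordInd, oneF]
  | cons i l ih =>
    have he (w : List (Fin n)) : (expF (delta [i]) : Fhat K n) w =
        if w = List.replicate w.length i then (w.length.factorial : K)⁻¹ else 0 := by
      simpa using expF_smul_delta (1 : K) i w
    rw [List.map_cons, prodListF]
    rcases u with _ | ⟨b, u⟩
    · rw [mulF_nil, ih _ hl.of_cons hu, he]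
      simp [subwordInd]
    rw [mulF_cons, ih _ hl.of_cons hu, he, mulF, Finset.sum_eq_single 0]
    · rw [he, List.drop_zero, ih _ hl.of_cons hu.of_cons]
      by_cases hb : b = i
      · subst hb
        have : ¬ (b :: u).Sublist l := fun h => (List.nodup_cons.mp hl).1 (h.subset (by simp))
        simp [subwordInd, this]
      · have : (b :: u).Sublist (i :: l) ↔ (b :: u).Sublist l :=
          ⟨fun h => h.of_cons_of_ne hb, fun h => h.cons i⟩
        simp [subwordInd, this, hb]
    · intro j hj hj0
      rw [he, if_neg, zero_mul]
      intro h
      have hn : (b :: u.take j).Nodup := hu.sublist ((List.take_sublist j u).cons_cons b)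
      rw [h, List.nodup_replicate] at hn
      simp only [mem_range, List.length_cons, List.length_take] at hj hn
      omega
    · simp

theorem CBHword_ofFn {m : ℕ} (c : Fin m → Fin n) :
    CBHword (K := K) (List.ofFn c) = pushF c (CBHuniv K m) := by
  have key (l : List (Fin n)) (h : l.length = m) :
      CBHword (K := K) l = pushF (fun i => l.get (i.cast h.symm)) (CBHuniv K m) := by
    subst h
    rfl
  rw [key _ (List.length_ofFn)]
  congr 1
  funext i
  simp

theorem powF_prodListF_perm {m : ℕ} (σ : Equiv.Perm (Fin m)) (k : ℕ) :
    powF (prodListF (List.ofFn fun i : Fin m => expF (delta [i])) - oneF : Fhat K m) k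
      (List.ofFn σ) = powF (subwordInd (List.ofFn σ.symm) - oneF) k (List.finRange m) := by
  rw [List.ofFn_eq_map (f := σ), powF_map]
  refine powF_congr k fun u hu => ?_
  have hn : u.Nodup := (List.nodup_finRange m).sublist hu
  rw [Pi.sub_apply, Pi.sub_apply, List.ofFn_eq_map,
    prodListF_expF_delta _ _ (List.nodup_finRange m) (hn.map σ.injective)]
  have : (u.map σ).Sublist (List.finRange m) ↔ u.Sublist (List.ofFn σ.symm) := by
    rw [List.ofFn_eq_map]
    constructor
    · intro h
      simpa using h.map σ.symm
    · intro h
      simpa using h.map σ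
  simp [subwordInd, this, oneF]

/-- A series multiplicative for the shuffle product has logarithm `ĉbh`. -/
theorem logF_eq_cbhHat {X : Fhat K n} (hX : IsShuffleChar X) : logF X = cbhHat X := by
  funext v
  obtain ⟨m, hm⟩ : ∃ m, m = v.length := ⟨_, rfl⟩
  obtain ⟨φ, rfl⟩ : ∃ φ : Fin m → Fin n, v = List.ofFn φ := by
    subst hm
    exact ⟨v.get, (List.ofFn_get v).symm⟩
  have hcbh : cbhHat X (List.ofFn φ) =
      ∑ c : Fin m → Fin n, X (List.ofFn c) * CBHword (List.ofFn c) (List.ofFn φ) := by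
    have key (l : List (Fin n)) (h : l.length = m) : cbhHat X l =
        ∑ c : Fin m → Fin n, X (List.ofFn c) * CBHword (List.ofFn c) l := by
      subst h
      rfl
    exact key _ (by simp)
  have hpush (c : Fin m → Fin n) : CBHword (K := K) (List.ofFn c) (List.ofFn φ) =
      ∑ u : Fin m → Fin m, if (List.ofFn u).map c = List.ofFn φ then
        CBHuniv K m (List.ofFn u) else 0 := by
    rw [CBHword_ofFn]
    have key (l : List (Fin n)) (h : l.length = m) : pushF c (CBHuniv K m) l =
        ∑ u : Fin m → Fin m, if (List.ofFn u).map c = l then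
          CBHuniv K m (List.ofFn u) else 0 := by
      subst h
      rfl
    exact key _ (by simp)
  have hsum : cbhHat X (List.ofFn φ) = ∑ σ : Equiv.Perm (Fin m),
      X (List.ofFn (φ ∘ σ.symm)) *
        logF (prodListF (List.ofFn fun i : Fin m => expF (delta [i]))) (List.ofFn σ) := by
    rw [hcbh]
    simp_rw [hpush, Finset.mul_sum]
    rw [Finset.sum_comm]
    have h1 (u : Fin m → Fin m) (hu : ¬ (List.ofFn u).Nodup) :
        CBHuniv K m (List.ofFn u) = 0 := by
      simp only [CBHuniv]
      rw [if_neg]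
      tauto
    rw [← Finset.sum_filter_of_ne (p := fun u : Fin m → Fin m => (List.ofFn u).Nodup)]
    · symm
      refine Finset.sum_nbij (fun σ => (σ : Fin m → Fin m)) ?_ ?_ ?_ ?_
      · intro σ _
        simpa [List.nodup_ofFn] using σ.injective
      · intro σ _ τ _ h
        exact DFunLike.coe_injective h
      · intro u hu
        simp only [coe_filter, mem_univ, true_and, Set.mem_ofPred_eq, List.nodup_ofFn] at hu
        exact ⟨Equiv.ofBijective u (Finite.injective_iff_bijective.mp hu), by simp, rfl⟩
      · intro σ _
        rw [Finset.sum_eq_single (φ ∘ σ.symm)]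
        · have : (List.ofFn σ).Nodup := List.nodup_ofFn.mpr σ.injective
          simp [CBHuniv, this, Function.comp_def]
        · intro c _ hc
          rw [if_neg, mul_zero]
          intro h
          apply hc
          rw [List.map_ofFn] at h
          rw [← List.ofFn_injective h]
          funext i
          simp
        · simp
    · intro u _ h
      by_contra hu
      simp [h1 u hu] at h
  rw [hsum]
  have hXφ : IsShuffleChar (fun u : List (Fin m) => X (u.map φ)) := by
    refine ⟨by simpa using hX.1, fun u v => ?_⟩
    rw [shuffleEval_comp_map φ X, hX.2]
  have hpow (k : ℕ) : powF (X - oneF) k (List.ofFn φ) = ∑ σ : Equiv.Perm (Fin m),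
      X (List.ofFn (φ ∘ σ.symm)) *
        powF (prodListF (List.ofFn fun i : Fin m => expF (delta [i])) - oneF : Fhat K m) k
          (List.ofFn σ) := by
    have h0 : (fun w : List (Fin m) => (X - oneF : Fhat K n) (w.map φ)) =
        (fun w : List (Fin m) => X (w.map φ)) - oneF := by
      funext w
      simp [oneF]
    rw [List.ofFn_eq_map, powF_map, h0, powF_sub_oneF_of_nodup hXφ k _ (List.nodup_finRange m)]
    symm
    refine Finset.sum_nbij (fun σ => List.ofFn σ.symm) ?_ ?_ ?_ ?_
    · intro σ _
      rw [List.mem_toFinset, List.mem_permutations,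
        List.perm_ext_iff_of_nodup (List.nodup_ofFn.mpr σ.symm.injective) (List.nodup_finRange m)]
      intro a
      simp only [List.mem_ofFn, List.mem_finRange, iff_true]
      exact ⟨σ a, by simp⟩
    · intro σ _ τ _ h
      have := List.ofFn_injective h
      exact Equiv.symm_bijective.injective (DFunLike.coe_injective this)
    · intro w hw
      simp only [mem_coe, List.mem_toFinset, List.mem_permutations] at hw
      have hl : w.length = m := by simpa using hw.length_eq
      have hn : w.Nodup := hw.nodup_iff.mpr (List.nodup_finRange m)
      obtain ⟨f, rfl⟩ : ∃ f : Fin m → Fin m, w = List.ofFn f :=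
        ⟨fun i => w.get (i.cast hl.symm), by
          apply List.ext_get <;> simp [hl]⟩
      rw [List.nodup_ofFn] at hn
      exact ⟨(Equiv.ofBijective f (Finite.injective_iff_bijective.mp hn)).symm, by simp, rfl⟩
    · intro σ _
      rw [powF_prodListF_perm, List.map_ofFn]
  simp only [logF, hpow, List.length_ofFn, Finset.mul_sum]
  rw [Finset.sum_comm]
  refine Finset.sum_congr rfl fun σ _ => Finset.sum_congr rfl fun k _ => ?_
  ring

theorem CBHword_eq_zero_of_length_ne {u v : List (Fin n)} (h : v.length ≠ u.length) :
    CBHword (K := K) u v = 0 := by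
  simp [CBHword, pushF, CBHuniv, h]

end CBH

section KZ

/-- The rational function `1/z` (for the letter `0`) or `1/(z-1)` (for the letter `1`). -/
def kzCoef (b : Fin 2) (z : ℝ) : ℝ := if b = 0 then z⁻¹ else (z - 1)⁻¹

/-- `G` solves the KZ equation on `]0,1[`, coefficientwise. -/
def SolvesKZ (G : ℝ → Fhat ℝ 2) : Prop :=
  ∀ z ∈ Set.Ioo (0 : ℝ) 1, ∀ w, HasDerivAt (fun t => G t w) (mulF (kzA z) (G z) w) z

theorem add_mulF (f g h : Fhat K n) : mulF (f + g) h = mulF f h + mulF g h := by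
  funext w
  simp [mulF, Finset.sum_add_distrib, add_mul]

theorem kzA_mulF_nil (z : ℝ) (g : Fhat ℝ 2) : mulF (kzA z) g [] = 0 := by
  simp [mulF_nil, kzA, delta]

theorem kzA_mulF_cons (z : ℝ) (g : Fhat ℝ 2) (b : Fin 2) (w : List (Fin 2)) :
    mulF (kzA z) g (b :: w) = kzCoef b z * g w := by
  rw [kzA, add_mulF, smul_mulF, smul_mulF]
  simp only [Pi.add_apply, Pi.smul_apply, delta_mulF_cons, kzCoef]
  fin_cases b <;> simp

theorem SolvesKZ.hasDerivAt_cons {G : ℝ → Fhat ℝ 2} (hG : SolvesKZ G) {z : ℝ}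
    (hz : z ∈ Set.Ioo (0 : ℝ) 1) (b : Fin 2) (w : List (Fin 2)) :
    HasDerivAt (fun t => G t (b :: w)) (kzCoef b z * G z w) z := by
  simpa only [kzA_mulF_cons] using hG z hz (b :: w)

theorem eq_of_hasDerivAt_zero_of_tendsto {f : ℝ → ℝ} {a b p c : ℝ}
    (hf : ∀ z ∈ Set.Ioo a b, HasDerivAt f 0 z) [hp : (nhdsWithin p (Set.Ioo a b)).NeBot]
    (hc : Tendsto f (nhdsWithin p (Set.Ioo a b)) (nhds c)) : ∀ z ∈ Set.Ioo a b, f z = c := by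
  intro z hz
  have h (y : ℝ) (hy : y ∈ Set.Ioo a b) : f y = f z :=
    isOpen_Ioo.is_const_of_deriv_eq_zero isPreconnected_Ioo
      (fun x hx => (hf x hx).differentiableAt.differentiableWithinAt)
      (fun x hx => (hf x hx).deriv) hy hz
  refine tendsto_nhds_unique ?_ hc
  refine tendsto_const_nhds.congr' ?_
  filter_upwards [self_mem_nhdsWithin] with y hy using (h y hy).symm

theorem hasDerivAt_shuffleEval {α : Type} {G : ℝ → List α → ℝ} {G' : List α → ℝ} {z : ℝ}
    (h : ∀ w, HasDerivAt (fun t => G t w) (G' w) z) (u v : List α) :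
    HasDerivAt (fun t => shuffleEval (G t) u v) (shuffleEval G' u v) z := by
  fun_induction shuffleEval G' u v generalizing G with
  | case1 => simpa [shuffleEval_nil_left] using h _
  | case2 => simpa [shuffleEval_nil_right] using h _
  | case3 G' a u b v ih1 ih2 =>
    simp only [shuffleEval_cons_cons]
    exact (ih1 (G := fun t w => G t (a :: w)) fun w => h _).add
      (ih2 (G := fun t w => G t (b :: w)) fun w => h _)

theorem tendsto_shuffleEval {α ι : Type} {l : Filter ι} {G : ι → List α → ℝ} {H : List α → ℝ}
    (h : ∀ w, Tendsto (fun t => G t w) l (nhds (H w))) (u v : List α) :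
    Tendsto (fun t => shuffleEval (G t) u v) l (nhds (shuffleEval H u v)) := by
  fun_induction shuffleEval H u v generalizing G with
  | case1 => simpa [shuffleEval_nil_left] using h _
  | case2 => simpa [shuffleEval_nil_right] using h _
  | case3 G' a u b v ih1 ih2 =>
    simp only [shuffleEval_cons_cons]
    exact (ih1 (G := fun t w => G t (a :: w)) fun w => h _).add
      (ih2 (G := fun t w => G t (b :: w)) fun w => h _)

theorem SolvesKZ.apply_nil {G E : ℝ → Fhat ℝ 2} (hG : SolvesKZ G) (hE : ∀ z, IsShuffleChar (E z))
    {p : ℝ} [hp : (nhdsWithin p (Set.Ioo (0 : ℝ) 1)).NeBot]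
    (hlim : ∀ w, Tendsto (fun z => mulF (G z) (E z) w) (nhdsWithin p (Set.Ioo (0 : ℝ) 1))
      (nhds (oneF w))) : ∀ z ∈ Set.Ioo (0 : ℝ) 1, G z [] = 1 := by
  refine eq_of_hasDerivAt_zero_of_tendsto (p := p) (fun z hz => ?_) ?_
  · simpa only [kzA_mulF_nil] using hG z hz []
  · simpa [mulF_nil, (hE _).1, oneF] using hlim []

theorem SolvesKZ.isShuffleChar {G E : ℝ → Fhat ℝ 2} (hG : SolvesKZ G)
    (hE : ∀ z, IsShuffleChar (E z))
    {p : ℝ} [hp : (nhdsWithin p (Set.Ioo (0 : ℝ) 1)).NeBot]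
    (hlim : ∀ w, Tendsto (fun z => mulF (G z) (E z) w) (nhdsWithin p (Set.Ioo (0 : ℝ) 1))
      (nhds (oneF w))) : ∀ z ∈ Set.Ioo (0 : ℝ) 1, IsShuffleChar (G z) := by
  have hnil := hG.apply_nil hE hlim
  suffices H : ∀ u v, ∀ z ∈ Set.Ioo (0 : ℝ) 1,
      G z u * G z v - shuffleEval (G z) u v = 0 from
    fun z hz => ⟨hnil z hz, fun u v => sub_eq_zero.mp (H u v z hz)⟩
  intro u v
  induction hN : u.length + v.length using Nat.strong_induction_on generalizing u v with
  | _ N ih =>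
  subst hN
  refine eq_of_hasDerivAt_zero_of_tendsto (p := p) (fun z hz => ?_) ?_
  · rcases u with _ | ⟨a, u⟩
    · refine (hasDerivAt_const z (0 : ℝ)).congr_of_eventuallyEq ?_
      filter_upwards [isOpen_Ioo.mem_nhds hz] with y hy
      simp [shuffleEval_nil_left, hnil y hy]
    rcases v with _ | ⟨b, v⟩
    · refine (hasDerivAt_const z (0 : ℝ)).congr_of_eventuallyEq ?_
      filter_upwards [isOpen_Ioo.mem_nhds hz] with y hy
      simp [shuffleEval_nil_right, hnil y hy]
    have h1 := ((hG.hasDerivAt_cons hz a u).mul (hG.hasDerivAt_cons hz b v)).sub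
      (hasDerivAt_shuffleEval (hG z hz) (a :: u) (b :: v))
    refine h1.congr_deriv ?_
    rw [shuffleEval_cons_cons]
    simp only [kzA_mulF_cons, shuffleEval_const_mul]
    have e1 := ih _ (by simp) u (b :: v) rfl z hz
    have e2 := ih _ (by simp) (a :: u) v rfl z hz
    linear_combination kzCoef a z * e1 + kzCoef b z * e2
  · have h1 := ((hlim u).mul (hlim v)).sub (tendsto_shuffleEval hlim u v)
    rw [oneF_isShuffleChar.2, sub_self] at h1
    refine h1.congr' ?_
    filter_upwards [self_mem_nhdsWithin] with z hz
    exact shuffle_defect_mulF_right (hE z) u v fun u' v' h =>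
      sub_eq_zero.mp (ih _ h u' v' rfl z hz)

end KZ

section Asymptotics

theorem expF_smul_delta_concat_of_ne {a b : Fin n} (hb : b ≠ a) (c : K) (w : List (Fin n)) :
    (expF (c • delta [a]) : Fhat K n) (w ++ [b]) = 0 := by
  rw [expF_smul_delta, if_neg]
  intro h
  have : b ∈ List.replicate (w ++ [b]).length a := h ▸ (by simp)
  exact hb (List.eq_of_mem_replicate this)

theorem mulF_expF_smul_delta_concat {a b : Fin n} (hb : b ≠ a) (f : Fhat K n) (c : K)
    (w : List (Fin n)) : mulF f (expF (c • delta [a])) (w ++ [b]) = f (w ++ [b]) := by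
  rw [mulF, Finset.sum_eq_single (w ++ [b]).length]
  · rw [List.take_length, List.drop_length, expF_smul_delta_nil, mul_one]
  · intro i hi hne
    have : i ≤ w.length := by simp at hi hne; omega
    rw [List.drop_append_of_le_length this, expF_smul_delta_concat_of_ne hb, mul_zero]
  · simp

instance neBot_nhdsWithin_zero : (nhdsWithin 0 (Set.Ioo (0 : ℝ) 1)).NeBot := by
  rw [nhdsWithin_Ioo_eq_nhdsGT one_pos]
  infer_instance

instance neBot_nhdsWithin_one : (nhdsWithin 1 (Set.Ioo (0 : ℝ) 1)).NeBot := by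
  rw [nhdsWithin_Ioo_eq_nhdsLT one_pos]
  infer_instance

open Asymptotics

/-- `f` grows at `1⁻` slower than any negative power of `1 - z`. -/
def Tempered (f : ℝ → ℝ) : Prop :=
  ∀ δ : ℝ, 0 < δ → f =O[nhdsWithin 1 (Set.Ioo (0 : ℝ) 1)] fun z => (1 - z) ^ (-δ)

theorem tendsto_one_sub_nhdsWithin :
    Tendsto (fun z : ℝ => 1 - z) (nhdsWithin 1 (Set.Ioo (0 : ℝ) 1))
      (nhdsWithin 0 (Set.Ioi 0)) := by
  refine tendsto_nhdsWithin_of_tendsto_nhds_of_eventually_within _ ?_ ?_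
  · have : Tendsto (fun z : ℝ => 1 - z) (nhds 1) (nhds (1 - 1)) :=
      (continuous_const.sub continuous_id).tendsto 1
    rw [sub_self] at this
    exact this.mono_left nhdsWithin_le_nhds
  · filter_upwards [self_mem_nhdsWithin] with z hz
    exact sub_pos.mpr hz.2

theorem tempered_const (c : ℝ) : Tempered fun _ => c := by
  intro δ hδ
  refine IsBigO.of_bound |c| ?_
  filter_upwards [self_mem_nhdsWithin] with z hz
  have h1 : 1 ≤ (1 - z) ^ (-δ) :=
    Real.one_le_rpow_of_pos_of_le_one_of_nonpos (by linarith [hz.2]) (by linarith [hz.1])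
      (by linarith)
  rw [Real.norm_eq_abs, Real.norm_of_nonneg (by linarith)]
  exact le_mul_of_one_le_right (abs_nonneg _) h1

theorem Tempered.of_tendsto {f : ℝ → ℝ} {c : ℝ}
    (h : Tendsto f (nhdsWithin 1 (Set.Ioo (0 : ℝ) 1)) (nhds c)) : Tempered f :=
  fun δ hδ => (h.isBigO_one ℝ).trans (tempered_const 1 δ hδ)

theorem Tempered.mul {f g : ℝ → ℝ} (hf : Tempered f) (hg : Tempered g) :
    Tempered fun z => f z * g z := by
  intro δ hδ
  refine ((hf (δ / 2) (by positivity)).mul (hg (δ / 2) (by positivity))).congr' .rfl ?_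
  filter_upwards [self_mem_nhdsWithin] with z hz
  rw [← Real.rpow_add (by linarith [hz.2])]
  ring_nf

theorem Tempered.sub {f g : ℝ → ℝ} (hf : Tempered f) (hg : Tempered g) :
    Tempered fun z => f z - g z :=
  fun δ hδ => (hf δ hδ).sub (hg δ hδ)

theorem Tempered.sum {ι : Type} {s : Finset ι} {f : ι → ℝ → ℝ} (h : ∀ i ∈ s, Tempered (f i)) :
    Tempered fun z => ∑ i ∈ s, f i z :=
  fun δ hδ => IsBigO.fun_sum fun i hi => h i hi δ hδ

theorem Tempered.pow {f : ℝ → ℝ} (hf : Tempered f) (k : ℕ) : Tempered fun z => f z ^ k := by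
  induction k with
  | zero => simpa using tempered_const 1
  | succ k ih => simpa only [pow_succ] using ih.mul hf

theorem tempered_log : Tempered fun z => -Real.log (1 - z) := by
  intro δ hδ
  exact ((isLittleO_log_rpow_nhdsGT_zero (neg_lt_zero.mpr hδ)).isBigO.comp_tendsto
    tendsto_one_sub_nhdsWithin).neg_left

theorem tempered_expF (a : Fin n) (w : List (Fin n)) :
    Tempered fun z => expF ((-Real.log (1 - z)) • delta [a]) w := by
  simp only [expF_smul_delta]
  split_ifs
  · exact (tempered_const _).mul (tempered_log.pow _)
  · exact tempered_const 0

theorem mulF_eq_add_sum (f g : Fhat K n) (hg : g [] = 1) (w : List (Fin n)) :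
    mulF f g w = f w + ∑ i ∈ range w.length, f (w.take i) * g (w.drop i) := by
  rw [mulF, Finset.sum_range_succ, add_comm]
  simp [hg]

theorem tempered_of_mulF {G : ℝ → Fhat ℝ n} {a : Fin n} {c : List (Fin n) → ℝ}
    (h : ∀ w, Tendsto (fun z => mulF (G z) (expF ((-Real.log (1 - z)) • delta [a])) w)
      (nhdsWithin 1 (Set.Ioo (0 : ℝ) 1)) (nhds (c w))) (w : List (Fin n)) :
    Tempered fun z => G z w := by
  induction hN : w.length using Nat.strong_induction_on generalizing w with
  | _ N ih =>
  subst hN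
  have h1 : Tempered fun z => mulF (G z) (expF ((-Real.log (1 - z)) • delta [a])) w -
      ∑ i ∈ range w.length, G z (w.take i) *
        expF ((-Real.log (1 - z)) • delta [a]) (w.drop i) := by
    refine (Tempered.of_tendsto (h w)).sub (Tempered.sum fun i hi => ?_)
    refine (ih _ ?_ (w.take i) rfl).mul (tempered_expF a _)
    simp at hi ⊢
    exact hi
  refine (funext fun z => ?_ : (fun z => G z w) = _) ▸ h1
  rw [mulF_eq_add_sum _ _ (expF_smul_delta_nil _ _)]
  ring

theorem isBigO_rpow_of_hasDerivAt {f f' : ℝ → ℝ}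
    (hf : ∀ z ∈ Set.Ioo (0 : ℝ) 1, HasDerivAt f (f' z) z)
    (h0 : Tendsto f (nhdsWithin 1 (Set.Ioo (0 : ℝ) 1)) (nhds 0))
    (h' : f' =O[nhdsWithin 1 (Set.Ioo (0 : ℝ) 1)] fun z => (1 - z) ^ (-(1 / 2) : ℝ)) :
    f =O[nhdsWithin 1 (Set.Ioo (0 : ℝ) 1)] fun z => (1 - z) ^ (1 / 2 : ℝ) := by
  obtain ⟨C, hC, hb⟩ := h'.exists_pos
  rw [isBigOWith_iff, nhdsWithin_Ioo_eq_nhdsLT one_pos] at hb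
  obtain ⟨a, ha, hab⟩ := (mem_nhdsLT_iff_exists_mem_Ico_Ioo_subset one_pos).mp hb
  refine IsBigO.of_bound (2 * C) ?_
  rw [nhdsWithin_Ioo_eq_nhdsLT one_pos]
  filter_upwards [Ioo_mem_nhdsLT ha.2] with z hz
  have hbound : ∀ y ∈ Set.Ioo z 1, ‖f y - f z‖ ≤ 2 * C * (1 - z) ^ (1 / 2 : ℝ) := by
    intro y hy
    have hmem : ∀ x ∈ Set.Icc z y, x ∈ Set.Ioo (0 : ℝ) 1 := fun x hx =>
      ⟨ha.1.trans_lt (hz.1.trans_le hx.1), hx.2.trans_lt hy.2⟩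
    have hB : ∀ x < (1 : ℝ), HasDerivAt
        (fun x => 2 * C * ((1 - z) ^ (1 / 2 : ℝ) - (1 - x) ^ (1 / 2 : ℝ)))
        (C * (1 - x) ^ (-(1 / 2) : ℝ)) x := by
      intro x hx
      have := ((((hasDerivAt_id x).const_sub 1).rpow_const (p := 1 / 2)
        (Or.inl (sub_pos.mpr hx).ne')).const_sub ((1 - z) ^ (1 / 2 : ℝ))).const_mul (2 * C)
      refine this.congr_deriv ?_
      norm_num
      ring
    have key := image_norm_le_of_norm_deriv_right_le_deriv_boundary'
      (f := fun x => f x - f z) (f' := f') (a := z) (b := y)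
      (B := fun x => 2 * C * ((1 - z) ^ (1 / 2 : ℝ) - (1 - x) ^ (1 / 2 : ℝ)))
      (B' := fun x => C * (1 - x) ^ (-(1 / 2) : ℝ))
      (fun x hx => ((hf x (hmem x hx)).sub_const _).continuousAt.continuousWithinAt)
      (fun x hx => ((hf x (hmem x ⟨hx.1, hx.2.le⟩)).sub_const _).hasDerivWithinAt)
      (by simp)
      (fun x hx => (hB x (hmem x hx).2).continuousAt.continuousWithinAt)
      (fun x hx => (hB x (hmem x ⟨hx.1, hx.2.le⟩).2).hasDerivWithinAt)
      (fun x hx => by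
        have hx1 := hmem x ⟨hx.1, hx.2.le⟩
        have := hab ⟨hz.1.trans_le hx.1, hx1.2⟩
        simp only [Set.mem_ofPred_eq] at this
        rwa [Real.norm_of_nonneg (Real.rpow_nonneg (sub_pos.mpr hx1.2).le _)] at this)
      (x := y) ⟨hy.1.le, le_rfl⟩
    refine key.trans ?_
    have : 0 ≤ (1 - y) ^ (1 / 2 : ℝ) := Real.rpow_nonneg (sub_pos.mpr hy.2).le _
    exact mul_le_mul_of_nonneg_left (by linarith) (by positivity)
  have hz1 : 0 ≤ (1 - z) ^ (1 / 2 : ℝ) := Real.rpow_nonneg (sub_pos.mpr hz.2).le _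
  rw [Real.norm_of_nonneg hz1]
  rw [nhdsWithin_Ioo_eq_nhdsLT one_pos] at h0
  have hlim := (h0.sub_const (f z)).norm
  rw [zero_sub, norm_neg] at hlim
  refine le_of_tendsto hlim ?_
  filter_upwards [Ioo_mem_nhdsLT hz.2] with y hy using hbound y hy

variable {G₀ G₁ : ℝ → Fhat ℝ 2} {Φ : Fhat ℝ 2}

theorem isBigO_zero_cons (hG : SolvesKZ G₁)
    (h : ∀ w, Tendsto (fun z => mulF (G₁ z) (expF ((-Real.log (1 - z)) • delta [(1 : Fin 2)])) w)
      (nhdsWithin 1 (Set.Ioo (0 : ℝ) 1)) (nhds (oneF w))) (u : List (Fin 2)) :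
    Tendsto (fun z => G₁ z (0 :: u)) (nhdsWithin 1 (Set.Ioo (0 : ℝ) 1)) (nhds 0) ∧
    (fun z => G₁ z (0 :: u)) =O[nhdsWithin 1 (Set.Ioo (0 : ℝ) 1)]
      fun z => (1 - z) ^ (1 / 2 : ℝ) := by
  induction hN : u.length using Nat.strong_induction_on generalizing u with
  | _ N ih =>
  subst hN
  have hsmall (f : ℝ → ℝ) (g : ℝ → ℝ)
      (hf : f =O[nhdsWithin 1 (Set.Ioo (0 : ℝ) 1)] fun z => (1 - z) ^ (1 / 2 : ℝ))
      (hg : Tempered g) :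
      Tendsto (fun z => f z * g z) (nhdsWithin 1 (Set.Ioo (0 : ℝ) 1)) (nhds 0) := by
    refine (hf.mul (hg (1 / 4) (by norm_num))).trans_tendsto ?_
    have : Tendsto (fun x : ℝ => x ^ (1 / 4 : ℝ)) (nhds 0) (nhds (0 ^ (1 / 4 : ℝ))) :=
      (Real.continuousAt_rpow_const _ _ (Or.inr (by norm_num))).tendsto
    rw [Real.zero_rpow (by norm_num)] at this
    refine ((this.mono_left nhdsWithin_le_nhds).comp tendsto_one_sub_nhdsWithin).congr' ?_
    filter_upwards [self_mem_nhdsWithin] with z hz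
    rw [← Real.rpow_add (by linarith [hz.2])]
    norm_num
  have hlim : Tendsto (fun z => G₁ z (0 :: u)) (nhdsWithin 1 (Set.Ioo (0 : ℝ) 1)) (nhds 0) := by
    have h1 := (h (0 :: u)).sub (tendsto_finsetSum (range u.length) fun i hi =>
      hsmall (fun z => G₁ z (0 :: u.take i))
        (fun z => expF ((-Real.log (1 - z)) • delta [(1 : Fin 2)]) (u.drop i))
        (ih _ (by simpa using hi) _ rfl).2 (tempered_expF 1 _))
    simp only [oneF, Finset.sum_const_zero, sub_zero, reduceCtorEq, if_false] at h1
    refine h1.congr fun z => ?_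
    have hE : (expF ((-Real.log (1 - z)) • delta [(1 : Fin 2)]) : Fhat ℝ 2) (0 :: u) = 0 := by
      rw [expF_smul_delta, if_neg]
      simp [List.replicate_succ]
    rw [mulF_cons, hE, mulF_eq_add_sum _ _ (expF_smul_delta_nil _ _)]
    ring
  refine ⟨hlim, isBigO_rpow_of_hasDerivAt (fun z hz => hG.hasDerivAt_cons hz 0 u) hlim ?_⟩
  have hinv : Tendsto (fun z : ℝ => kzCoef 0 z) (nhdsWithin 1 (Set.Ioo (0 : ℝ) 1)) (nhds 1) := by
    simp only [kzCoef, if_true]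
    have : Tendsto (fun z : ℝ => z⁻¹) (nhds 1) (nhds 1⁻¹) := tendsto_inv₀ one_ne_zero
    rw [inv_one] at this
    exact this.mono_left nhdsWithin_le_nhds
  exact ((Tempered.of_tendsto hinv).mul (tempered_of_mulF h u)) _ (by norm_num)

/-- The coefficients of the KZ associator at words starting with `0` are limits at `1⁻` of the
coefficients of `G₀`. -/
theorem tendsto_associator (hnil : ∀ z ∈ Set.Ioo (0 : ℝ) 1, G₁ z [] = 1) (hG : SolvesKZ G₁)
    (h : ∀ w, Tendsto (fun z => mulF (G₁ z) (expF ((-Real.log (1 - z)) • delta [(1 : Fin 2)])) w)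
      (nhdsWithin 1 (Set.Ioo (0 : ℝ) 1)) (nhds (oneF w)))
    (hΦ : ∀ z ∈ Set.Ioo (0 : ℝ) 1, mulF (G₁ z) Φ = G₀ z) (u : List (Fin 2)) :
    Tendsto (fun z => G₀ z (0 :: u)) (nhdsWithin 1 (Set.Ioo (0 : ℝ) 1)) (nhds (Φ (0 :: u))) := by
  have h1 := (tendsto_finsetSum (range (u.length + 1)) fun i _ =>
    (isBigO_zero_cons hG h (u.take i)).1.mul_const (Φ (u.drop i))).const_add (Φ (0 :: u))
  simp only [zero_mul, Finset.sum_const_zero, add_zero] at h1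
  refine h1.congr' ?_
  filter_upwards [self_mem_nhdsWithin] with z hz
  rw [← hΦ z hz, mulF_cons, hnil z hz, one_mul]
  rfl

theorem tendsto_concat_one
    (h : ∀ w, Tendsto (fun z => mulF (G₀ z) (expF ((-Real.log z) • delta [(0 : Fin 2)])) w)
      (nhdsWithin 0 (Set.Ioo (0 : ℝ) 1)) (nhds (oneF w))) (w : List (Fin 2)) :
    Tendsto (fun z => G₀ z (w ++ [1])) (nhdsWithin 0 (Set.Ioo (0 : ℝ) 1)) (nhds 0) := by
  have := h (w ++ [1])
  simp only [mulF_expF_smul_delta_concat (one_ne_zero : (1 : Fin 2) ≠ 0)] at this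
  simpa [oneF] using this

end Asymptotics

section Associator

variable {G₀ G₁ : ℝ → Fhat ℝ 2} {Φ : Fhat ℝ 2}

theorem associator_zero (hnil₀ : ∀ z ∈ Set.Ioo (0 : ℝ) 1, G₀ z [] = 1)
    (hnil : ∀ z ∈ Set.Ioo (0 : ℝ) 1, G₁ z [] = 1) (hG₀ : SolvesKZ G₀) (hG₁ : SolvesKZ G₁)
    (h₀ : ∀ w, Tendsto (fun z => mulF (G₀ z) (expF ((-Real.log z) • delta [(0 : Fin 2)])) w)
      (nhdsWithin 0 (Set.Ioo (0 : ℝ) 1)) (nhds (oneF w)))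
    (h₁ : ∀ w, Tendsto
      (fun z => mulF (G₁ z) (expF ((-Real.log (1 - z)) • delta [(1 : Fin 2)])) w)
      (nhdsWithin 1 (Set.Ioo (0 : ℝ) 1)) (nhds (oneF w)))
    (hΦ : ∀ z ∈ Set.Ioo (0 : ℝ) 1, mulF (G₁ z) Φ = G₀ z) : Φ [0] = 0 := by
  have key : ∀ z ∈ Set.Ioo (0 : ℝ) 1, G₀ z [0] - Real.log z = 0 := by
    refine eq_of_hasDerivAt_zero_of_tendsto (p := 0) (fun z hz => ?_) ?_
    · refine ((hG₀.hasDerivAt_cons hz 0 []).sub (Real.hasDerivAt_log hz.1.ne')).congr_deriv ?_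
      simp [hnil₀ z hz, kzCoef]
    · have := h₀ [0]
      simp only [oneF, reduceCtorEq, if_false] at this
      refine this.congr' ?_
      filter_upwards [self_mem_nhdsWithin] with z hz
      rw [mulF_cons, mulF_nil, hnil₀ z hz, expF_smul_delta, expF_smul_delta]
      simp
      ring
  have hlog : Tendsto Real.log (nhdsWithin 1 (Set.Ioo (0 : ℝ) 1)) (nhds 0) := by
    have := (Real.continuousAt_log one_ne_zero).tendsto
    rw [Real.log_one] at this
    exact this.mono_left nhdsWithin_le_nhds
  refine tendsto_nhds_unique (tendsto_associator hnil hG₁ h₁ hΦ []) (hlog.congr' ?_)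
  filter_upwards [self_mem_nhdsWithin] with z hz
  linarith [key z hz]

theorem associator_one (hnil₀ : ∀ z ∈ Set.Ioo (0 : ℝ) 1, G₀ z [] = 1)
    (hnil : ∀ z ∈ Set.Ioo (0 : ℝ) 1, G₁ z [] = 1) (hG₀ : SolvesKZ G₀) (hG₁ : SolvesKZ G₁)
    (h₀ : ∀ w, Tendsto (fun z => mulF (G₀ z) (expF ((-Real.log z) • delta [(0 : Fin 2)])) w)
      (nhdsWithin 0 (Set.Ioo (0 : ℝ) 1)) (nhds (oneF w)))
    (h₁ : ∀ w, Tendsto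
      (fun z => mulF (G₁ z) (expF ((-Real.log (1 - z)) • delta [(1 : Fin 2)])) w)
      (nhdsWithin 1 (Set.Ioo (0 : ℝ) 1)) (nhds (oneF w)))
    (hΦ : ∀ z ∈ Set.Ioo (0 : ℝ) 1, mulF (G₁ z) Φ = G₀ z) : Φ [1] = 0 := by
  have hlog (z : ℝ) (hz : z ∈ Set.Ioo (0 : ℝ) 1) :
      HasDerivAt (fun t => Real.log (1 - t)) (z - 1)⁻¹ z := by
    have hz' : 1 - z ≠ 0 := by linarith [hz.2]
    refine (((hasDerivAt_id z).const_sub 1).log hz').congr_deriv ?_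
    rw [id, neg_div, one_div, ← inv_neg, neg_sub]
  have key₀ : ∀ z ∈ Set.Ioo (0 : ℝ) 1, G₀ z [1] - Real.log (1 - z) = 0 := by
    refine eq_of_hasDerivAt_zero_of_tendsto (p := 0) (fun z hz => ?_) ?_
    · refine ((hG₀.hasDerivAt_cons hz 1 []).sub (hlog z hz)).congr_deriv ?_
      simp [hnil₀ z hz, kzCoef]
    · have h2 : Tendsto (fun z => Real.log (1 - z)) (nhds 0) (nhds (Real.log (1 - 0))) :=
        ((continuous_const.sub continuous_id).continuousAt.log (by simp)).tendsto
      simpa using (tendsto_concat_one h₀ []).sub (h2.mono_left nhdsWithin_le_nhds)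
  have key₁ : ∀ z ∈ Set.Ioo (0 : ℝ) 1, G₁ z [1] - Real.log (1 - z) = 0 := by
    refine eq_of_hasDerivAt_zero_of_tendsto (p := 1) (fun z hz => ?_) ?_
    · refine ((hG₁.hasDerivAt_cons hz 1 []).sub (hlog z hz)).congr_deriv ?_
      simp [hnil z hz, kzCoef]
    · have := h₁ [1]
      simp only [oneF, reduceCtorEq, if_false] at this
      refine this.congr' ?_
      filter_upwards [self_mem_nhdsWithin] with z hz
      rw [mulF_cons, mulF_nil, hnil z hz, expF_smul_delta, expF_smul_delta]
      simp
      ring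
  have hmem : (1 / 2 : ℝ) ∈ Set.Ioo (0 : ℝ) 1 := by norm_num
  have e := congrFun (hΦ _ hmem) [1]
  have e' := congrFun (hΦ _ hmem) []
  rw [mulF_nil, hnil _ hmem, hnil₀ _ hmem, one_mul] at e'
  rw [mulF_cons, mulF_nil, hnil _ hmem, e'] at e
  linarith [key₀ _ hmem, key₁ _ hmem]

end Associator

section IteratedIntegral

/-- The simplex `{0 ≤ t₁ ≤ ⋯ ≤ t_m ≤ z}`. -/
def simplexTo (m : ℕ) (z : ℝ) : Set (Fin m → ℝ) :=
  {t | Monotone t ∧ ∀ j, t j ∈ Set.Icc (0 : ℝ) z}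

theorem isClosed_simplexTo (m : ℕ) (z : ℝ) : IsClosed (simplexTo m z) := by
  have h : simplexTo m z = {t | Monotone t} ∩ ⋂ j, (fun t : Fin m → ℝ => t j) ⁻¹' Set.Icc 0 z := by
    ext t
    simp [simplexTo]
  rw [h]
  exact isClosed_monotone.inter
    (isClosed_iInter fun j => isClosed_Icc.preimage (continuous_apply j))

theorem measurableSet_simplexTo (m : ℕ) (z : ℝ) : MeasurableSet (simplexTo m z) :=
  (isClosed_simplexTo m z).measurableSet

theorem snoc_mem_simplexTo {m : ℕ} {z s : ℝ} {t : Fin m → ℝ} :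
    (Fin.snoc t s : Fin (m + 1) → ℝ) ∈ simplexTo (m + 1) z ↔
      s ∈ Set.Icc (0 : ℝ) z ∧ t ∈ simplexTo m s := by
  constructor
  · rintro ⟨h1, h2⟩
    refine ⟨by simpa using h2 (Fin.last m), ⟨fun i j hij => ?_, fun j => ⟨?_, ?_⟩⟩⟩
    · simpa using h1 (Fin.castSucc_le_castSucc_iff.mpr hij)
    · simpa using (h2 j.castSucc).1
    · simpa using h1 (Fin.le_last j.castSucc)
  · rintro ⟨hs, h1, h2⟩
    refine ⟨fun i j hij => ?_, fun j => ?_⟩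
    · induction j using Fin.lastCases with
      | last =>
        induction i using Fin.lastCases with
        | last => exact le_rfl
        | cast i => simpa using (h2 i).2
      | cast j =>
        induction i using Fin.lastCases with
        | last => exact absurd (Fin.le_castSucc_iff.mp hij |>.trans_le (Fin.le_last _)) (by simp)
        | cast i => simpa using h1 (Fin.castSucc_le_castSucc_iff.mp hij)
    · induction j using Fin.lastCases with
      | last => simpa using hs
      | cast j => simpa using ⟨(h2 j).1, (h2 j).2.trans hs.2⟩

theorem lintegral_simplexTo_succ (m : ℕ) (z : ℝ) {F : (Fin (m + 1) → ℝ) → ENNReal}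
    (hF : Measurable F) :
    ∫⁻ t in simplexTo (m + 1) z, F t =
      ∫⁻ s in Set.Icc 0 z, ∫⁻ t in simplexTo m s, F (Fin.snoc t s) := by
  have hmp := (volume_preserving_piFinSuccAbove (fun _ : Fin (m + 1) => ℝ) (Fin.last m)).symm
  rw [← lintegral_indicator (measurableSet_simplexTo _ _), ← hmp.lintegral_comp
    (hF.indicator (measurableSet_simplexTo _ _)), Measure.volume_eq_prod,
    lintegral_prod (fun p => (simplexTo (m + 1) z).indicator F
      ((MeasurableEquiv.piFinSuccAbove (fun _ : Fin (m + 1) => ℝ) (Fin.last m)).symm p))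
      ((hF.indicator (measurableSet_simplexTo _ _)).comp
        (MeasurableEquiv.measurable _)).aemeasurable, ← lintegral_indicator measurableSet_Icc]
  refine lintegral_congr fun s => ?_
  have hsn (t : Fin m → ℝ) :
      (MeasurableEquiv.piFinSuccAbove (fun _ : Fin (m + 1) => ℝ) (Fin.last m)).symm (s, t) =
        Fin.snoc t s := by
    exact Fin.insertNth_last' s t
  simp only [hsn]
  by_cases hs : s ∈ Set.Icc 0 z
  · rw [Set.indicator_of_mem hs, ← lintegral_indicator (measurableSet_simplexTo _ _)]
    refine lintegral_congr fun t => ?_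
    by_cases ht : t ∈ simplexTo m s
    · rw [Set.indicator_of_mem ht, Set.indicator_of_mem (snoc_mem_simplexTo.mpr ⟨hs, ht⟩)]
    · rw [Set.indicator_of_notMem ht,
        Set.indicator_of_notMem fun h => ht (snoc_mem_simplexTo.mp h).2]
  · rw [Set.indicator_of_notMem hs]
    refine (lintegral_congr fun t => ?_).trans lintegral_zero
    exact Set.indicator_of_notMem (fun h => hs (snoc_mem_simplexTo.mp h).1) _

theorem lintegral_Icc_of_hasDerivAt_of_tendsto {g g' : ℝ → ℝ} {a b l r : ℝ} (hab : a < b)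
    (hg : ∀ x ∈ Set.Ioo a b, HasDerivAt g (g' x) x) (hpos : ∀ x ∈ Set.Ioo a b, 0 ≤ g' x)
    (ha : Tendsto g (nhdsWithin a (Set.Ioi a)) (nhds l))
    (hb : Tendsto g (nhdsWithin b (Set.Iio b)) (nhds r)) :
    ∫⁻ x in Set.Icc a b, ENNReal.ofReal (g' x) = ENNReal.ofReal (r - l) ∧ l ≤ r := by
  set F : ℝ → ℝ := Function.update (Function.update g a l) b r with hF
  have hFg : ∀ x ∈ Set.Ioo a b, F =ᶠ[nhds x] g := by
    intro x hx
    filter_upwards [isOpen_Ioo.mem_nhds hx] with y hy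
    simp [hF, hy.1.ne', hy.2.ne]
  have hderiv : ∀ x ∈ Set.Ioo a b, HasDerivAt F (g' x) x := fun x hx =>
    (hg x hx).congr_of_eventuallyEq (hFg x hx)
  have hcont : ContinuousOn F (Set.Icc a b) := by
    rw [continuousOn_update_iff, continuousOn_update_iff, Set.Icc_sdiff_right, Set.Ico_sdiff_left]
    refine ⟨⟨fun x hx => (hg x hx).continuousAt.continuousWithinAt, fun _ => ?_⟩, fun _ => ?_⟩
    · exact ha.mono_left (nhdsWithin_mono _ Set.Ioo_subset_Ioi_self)
    · refine (hb.congr' ?_).mono_left (nhdsWithin_mono _ Set.Ico_subset_Iio_self)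
      filter_upwards [Ioo_mem_nhdsLT hab] with y hy
      simp [hy.1.ne']
  have hInt := intervalIntegral.integrableOn_deriv_of_nonneg hcont hderiv hpos
  have hI := intervalIntegral.integral_eq_sub_of_hasDerivAt_of_tendsto hab hg
    ((intervalIntegrable_iff_integrableOn_Ioc_of_le hab.le).mpr hInt) ha hb
  rw [intervalIntegral.integral_of_le hab.le] at hI
  have hpos' : 0 ≤ᵐ[volume.restrict (Set.Ioo a b)] g' := by
    filter_upwards [ae_restrict_mem measurableSet_Ioo] with x hx using hpos x hx
  rw [integral_Ioc_eq_integral_Ioo] at hI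
  constructor
  · rw [setLIntegral_congr Ioo_ae_eq_Icc.symm, ← hI, ofReal_integral_eq_lintegral_ofReal
      (hInt.mono_set Set.Ioo_subset_Ioc_self) hpos']
  · have := integral_nonneg_of_ae hpos'
    linarith

end IteratedIntegral

section Omega

/-- The word `a_m ⋯ a_1` attached to the sequence `(a_1, …, a_m)`. -/
def revWord {m : ℕ} (a : Fin m → Fin 2) : List (Fin 2) := List.ofFn fun j => a (Fin.rev j)

theorem revWord_snoc {m : ℕ} (a : Fin m → Fin 2) (b : Fin 2) :
    revWord (Fin.snoc a b : Fin (m + 1) → Fin 2) = b :: revWord a := by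
  simp [revWord, List.ofFn_succ, Fin.rev_succ]

theorem revWord_succ {m : ℕ} (a : Fin (m + 1) → Fin 2) :
    revWord a = revWord (fun j => a j.succ) ++ [a 0] := by
  rw [revWord, List.ofFn_succ', Fin.rev_last, List.concat_eq_append]
  simp only [Fin.rev_castSucc]
  rfl

/-- The sign of `1/(z-a)` on `]0,1[`, for the letter `a`. -/
def kzSign (b : Fin 2) : ℝ := if b = 0 then 1 else -1

/-- The absolute value of `1/(z-a)` on `[0,1]`, for the letter `a`. -/
def kzAbs (b : Fin 2) (z : ℝ) : ℝ := if b = 0 then z⁻¹ else (1 - z)⁻¹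

theorem kzSign_mul_kzAbs (b : Fin 2) (z : ℝ) : kzSign b * kzAbs b z = kzCoef b z := by
  unfold kzSign kzAbs kzCoef
  split_ifs
  · rw [one_mul]
  · rw [← neg_sub 1 z, inv_neg, neg_one_mul]

theorem kzSign_mul_self (b : Fin 2) : kzSign b * kzSign b = 1 := by
  unfold kzSign
  split_ifs <;> norm_num

theorem kzAbs_nonneg (b : Fin 2) {z : ℝ} (hz : z ∈ Set.Icc (0 : ℝ) 1) : 0 ≤ kzAbs b z := by
  unfold kzAbs
  split_ifs
  · exact inv_nonneg.mpr hz.1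
  · exact inv_nonneg.mpr (sub_nonneg.mpr hz.2)

theorem measurable_kzAbs (b : Fin 2) : Measurable (kzAbs b) := by
  unfold kzAbs
  split_ifs
  · exact measurable_inv
  · exact (measurable_const.sub measurable_id).inv

theorem measurable_prod_kzAbs {m : ℕ} (a : Fin m → Fin 2) :
    Measurable fun t : Fin m → ℝ => ∏ j, ENNReal.ofReal (kzAbs (a j) (t j)) :=
  Finset.measurable_fun_prod _ fun j _ =>
    ((measurable_kzAbs (a j)).comp (measurable_pi_apply j)).ennreal_ofReal

/-- The integral of `∏ |ω_{a_j}|` over the simplex is the real number `x`. -/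
def HasAbsIntegral {m : ℕ} (a : Fin m → Fin 2) (z x : ℝ) : Prop :=
  0 ≤ x ∧ ∫⁻ t in simplexTo m z, ∏ j, ENNReal.ofReal (kzAbs (a j) (t j)) = ENNReal.ofReal x

variable {G₀ : ℝ → Fhat ℝ 2}

theorem HasAbsIntegral.snoc (hG : SolvesKZ G₀) {m : ℕ} {a : Fin m → Fin 2} {b : Fin 2} {z r : ℝ}
    (hz : 0 < z) (hz1 : z ≤ 1)
    (ih : ∀ s ∈ Set.Ioo 0 z, HasAbsIntegral a s ((∏ j, kzSign (a j)) * G₀ s (revWord a)))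
    (h0 : Tendsto (fun s => G₀ s (b :: revWord a)) (nhdsWithin 0 (Set.Ioi 0)) (nhds 0))
    (hr : Tendsto (fun s => G₀ s (b :: revWord a)) (nhdsWithin z (Set.Iio z)) (nhds r)) :
    HasAbsIntegral (Fin.snoc a b : Fin (m + 1) → Fin 2) z
      ((∏ j, kzSign (a j)) * kzSign b * r) := by
  have hmem : ∀ s ∈ Set.Ioo 0 z, s ∈ Set.Ioo (0 : ℝ) 1 := fun s hs => ⟨hs.1, hs.2.trans_le hz1⟩
  have hpos : ∀ s ∈ Set.Ioo 0 z, 0 ≤ kzAbs b s * ((∏ j, kzSign (a j)) * G₀ s (revWord a)) :=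
    fun s hs => mul_nonneg (kzAbs_nonneg b (Set.Ioo_subset_Icc_self (hmem s hs))) (ih s hs).1
  have key := lintegral_Icc_of_hasDerivAt_of_tendsto
    (g := fun s => (∏ j, kzSign (a j)) * kzSign b * G₀ s (b :: revWord a))
    (g' := fun s => kzAbs b s * ((∏ j, kzSign (a j)) * G₀ s (revWord a))) hz
    (fun s hs => ((hG.hasDerivAt_cons (hmem s hs) b (revWord a)).const_mul _).congr_deriv (by
      rw [← kzSign_mul_kzAbs]
      linear_combination (∏ j, kzSign (a j)) * kzAbs b s * G₀ s (revWord a) * kzSign_mul_self b))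
    hpos (h0.const_mul _) (hr.const_mul _)
  rw [mul_zero, sub_zero] at key
  refine ⟨key.2, ?_⟩
  rw [lintegral_simplexTo_succ m z (measurable_prod_kzAbs _), ← key.1,
    setLIntegral_congr Ioo_ae_eq_Icc.symm, setLIntegral_congr Ioo_ae_eq_Icc.symm]
  refine setLIntegral_congr_fun measurableSet_Ioo fun s hs => ?_
  simp only [Fin.prod_univ_castSucc, Fin.snoc_castSucc, Fin.snoc_last]
  rw [lintegral_mul_const _ (measurable_prod_kzAbs a), (ih s hs).2, mul_comm,
    ← ENNReal.ofReal_mul (kzAbs_nonneg b (Set.Ioo_subset_Icc_self (hmem s hs)))]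

theorem tendsto_revWord
    (h₀ : ∀ w, Tendsto (fun z => mulF (G₀ z) (expF ((-Real.log z) • delta [(0 : Fin 2)])) w)
      (nhdsWithin 0 (Set.Ioo (0 : ℝ) 1)) (nhds (oneF w)))
    {m : ℕ} (a : Fin (m + 1) → Fin 2) (ha : a 0 = 1) :
    Tendsto (fun s => G₀ s (revWord a)) (nhdsWithin 0 (Set.Ioi 0)) (nhds 0) := by
  rw [revWord_succ, ha, ← nhdsWithin_Ioo_eq_nhdsGT one_pos]
  exact tendsto_concat_one h₀ _

theorem hasAbsIntegral (hnil : ∀ z ∈ Set.Ioo (0 : ℝ) 1, G₀ z [] = 1) (hG : SolvesKZ G₀)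
    (h₀ : ∀ w, Tendsto (fun z => mulF (G₀ z) (expF ((-Real.log z) • delta [(0 : Fin 2)])) w)
      (nhdsWithin 0 (Set.Ioo (0 : ℝ) 1)) (nhds (oneF w)))
    {m : ℕ} (a : Fin m → Fin 2) (ha : ∀ h : 0 < m, a ⟨0, h⟩ = 1) {z : ℝ}
    (hz : z ∈ Set.Ioo (0 : ℝ) 1) :
    HasAbsIntegral a z ((∏ j, kzSign (a j)) * G₀ z (revWord a)) := by
  induction m generalizing z with
  | zero =>
    have hs : simplexTo 0 z = Set.univ := by
      ext t
      simp [simplexTo, Subsingleton.monotone]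
    simp [HasAbsIntegral, revWord, hnil z hz, hs, volume_pi]
  | succ m ih =>
    have h0 := tendsto_revWord h₀ a (ha m.succ_pos)
    rw [← Fin.snoc_init_self a] at h0 ⊢
    rw [revWord_snoc] at h0 ⊢
    simp only [Fin.prod_univ_castSucc, Fin.snoc_castSucc, Fin.snoc_last]
    refine HasAbsIntegral.snoc hG hz.1 hz.2.le (fun s hs => ih _ (fun h => ?_)
      ⟨hs.1, hs.2.trans hz.2⟩) h0 ?_
    · exact ha m.succ_pos
    · exact (hG.hasDerivAt_cons hz _ _).continuousAt.tendsto.mono_left nhdsWithin_le_nhds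

theorem omegaMZV_of_hasAbsIntegral {m : ℕ} {a : Fin m → Fin 2} {x : ℝ}
    (h : HasAbsIntegral a 1 ((∏ j, kzSign (a j)) * x)) : omegaMZV a = x := by
  have hI : ∀ t : Fin m → ℝ, ∏ j, (if a j = 0 then (t j)⁻¹ else (t j - 1)⁻¹) =
      (∏ j, kzSign (a j)) * ∏ j, kzAbs (a j) (t j) := by
    intro t
    rw [← Finset.prod_mul_distrib]
    exact Finset.prod_congr rfl fun j _ => (kzSign_mul_kzAbs _ _).symm
  have hsq : (∏ j, kzSign (a j)) * (∏ j, kzSign (a j)) = 1 := by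
    rw [← Finset.prod_mul_distrib]
    exact Finset.prod_eq_one fun j _ => kzSign_mul_self _
  have hnn : ∀ t ∈ simplexTo m 1, ∀ j, 0 ≤ kzAbs (a j) (t j) :=
    fun t ht j => kzAbs_nonneg _ (ht.2 j)
  have hmeas : Measurable fun t : Fin m → ℝ => ∏ j, kzAbs (a j) (t j) :=
    Finset.measurable_fun_prod _ fun j _ => (measurable_kzAbs (a j)).comp (measurable_pi_apply j)
  have hInt : ∫ t in simplexTo m 1, ∏ j, kzAbs (a j) (t j) = (∏ j, kzSign (a j)) * x := by
    rw [integral_eq_lintegral_of_nonneg_ae _ hmeas.aestronglyMeasurable,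
      ← ENNReal.toReal_ofReal h.1, ← h.2]
    · congr 1
      refine setLIntegral_congr_fun (measurableSet_simplexTo m 1) fun t ht => ?_
      exact ENNReal.ofReal_prod_of_nonneg fun j _ => hnn t ht j
    · filter_upwards [ae_restrict_mem (measurableSet_simplexTo m 1)] with t ht
      exact Finset.prod_nonneg fun j _ => hnn t ht j
  have : omegaMZV a = ∫ t in simplexTo m 1, (∏ j, kzSign (a j)) * ∏ j, kzAbs (a j) (t j) := by
    simp only [omegaMZV, hI]
    rfl
  rw [this, integral_const_mul, hInt, ← mul_assoc, hsq, one_mul]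

end Omega

section Main

variable {G₀ G₁ : ℝ → Fhat ℝ 2} {Φ : Fhat ℝ 2}

theorem omegaMZV_eq_associator (hnil₀ : ∀ z ∈ Set.Ioo (0 : ℝ) 1, G₀ z [] = 1)
    (hG₀ : SolvesKZ G₀)
    (h₀ : ∀ w, Tendsto (fun z => mulF (G₀ z) (expF ((-Real.log z) • delta [(0 : Fin 2)])) w)
      (nhdsWithin 0 (Set.Ioo (0 : ℝ) 1)) (nhds (oneF w)))
    (hlim : ∀ u, Tendsto (fun z => G₀ z (0 :: u)) (nhdsWithin 1 (Set.Ioo (0 : ℝ) 1))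
      (nhds (Φ (0 :: u))))
    {m : ℕ} (a : Fin (m + 1) → Fin 2) (ha : a 0 = 1) (hl : a (Fin.last m) = 0) :
    omegaMZV a = Φ (revWord a) := by
  refine omegaMZV_of_hasAbsIntegral ?_
  have h0 := tendsto_revWord h₀ a ha
  rw [← Fin.snoc_init_self a] at h0 ⊢
  rw [revWord_snoc] at h0 ⊢
  simp only [Fin.prod_univ_castSucc, Fin.snoc_castSucc, Fin.snoc_last]
  refine HasAbsIntegral.snoc hG₀ one_pos le_rfl
    (fun s hs => hasAbsIntegral hnil₀ hG₀ h₀ (Fin.init a) (fun _ => ha) hs) h0 ?_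
  rw [hl, ← nhdsWithin_Ioo_eq_nhdsLT one_pos]
  exact hlim _

theorem sum_CBHword_eq {X : Fhat ℝ 2} (hX : IsShuffleChar X) (h0 : X [0] = 0) (h1 : X [1] = 0)
    (hω : ∀ {m : ℕ} (a : Fin (m + 1) → Fin 2), a 0 = 1 → a (Fin.last m) = 0 →
      omegaMZV a = X (revWord a)) (m : ℕ) (f : List (Fin 2) → ℝ) :
    (∑ a : Fin (m + 1) → Fin 2, ∑ i : Fin (m + 1) → Fin 2,
      if a 0 = 1 ∧ a (Fin.last m) = 0 then
        omegaMZV a * Ccoef a i * f (List.ofFn fun j => i (Fin.rev j)) else 0) =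
    ∑ c : Fin (m + 1) → Fin 2, X (List.ofFn c) * f (List.ofFn c) := by
  rw [Finset.sum_comm, ← (Equiv.arrowCongr Fin.revPerm (Equiv.refl (Fin 2))).sum_comp
    fun c : Fin (m + 1) → Fin 2 => X (List.ofFn c) * f (List.ofFn c)]
  refine Finset.sum_congr rfl fun i _ => ?_
  have hi : (Equiv.arrowCongr Fin.revPerm (Equiv.refl (Fin 2))) i = fun j => i (Fin.rev j) := rfl
  rw [hi, ← sum_mul_LMelem hX h0 h1 (m := m + 1) (List.ofFn fun j => i (Fin.rev j)) (by simp),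
    Finset.sum_mul]
  refine Finset.sum_congr rfl fun a _ => ?_
  have hne {x : Fin 2} : x ≠ 0 ↔ x = 1 := by omega
  have hne' {x : Fin 2} : x ≠ 1 ↔ x = 0 := by omega
  split_ifs with h
  · rw [hω a h.1 h.2]
    rfl
  · rw [not_and_or] at h
    rcases h with h | h
    · simp [LMelem_eq_zero_of_first a (hne'.mp h)]
    · simp [LMelem_eq_zero_of_last a (hne.mp h)]

end Main

end Preliminaries

/-- **Corollary 3: the logarithm of the KZ associator.**  Let
`G₀, G₁ : ]0,1[ → F̂₂` be the solutions of the KZ equation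
`G'(z) = (A₀/z + A₁/(z-1)) G(z)` (coefficientwise, for every word `w`) with
`G₀(z) ∼ z^{A₀}` as `z → 0⁺` and `G₁(z) ∼ (1-z)^{A₁}` as `z → 1⁻` (i.e.
`G₀(z)·z^{-A₀} → 1` and `G₁(z)·(1-z)^{-A₁} → 1` coefficientwise), and let
`Φ ∈ F̂₂` be the KZ associator, the renormalized holonomy determined by
`G₀(z) = G₁(z)·Φ`.  Then, coefficientwise on every word `v` (only the terms
`n = |v|` contribute),
`log Φ = ∑_{n ≥ 1} ∑_{(a₁,…,aₙ) admissible, (i₁,…,iₙ) ∈ {0,1}ⁿ}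
  ω_{a₁,…,aₙ} C^{a₁,…,aₙ}_{i₁,…,iₙ} CBHₙ(A_{iₙ}, …, A_{i₁})`,
where a sequence `(a₁,…,aₙ)` is admissible when `a₁ = 1` and `aₙ = 0`
(below `n = m + 1 ≥ 1`, sequences are indexed by `Fin (m+1)`, and
`CBHₙ(A_{iₙ},…,A_{i₁}) = CBHword [iₙ,…,i₁] ∈ f̂₂ ⊆ F̂₂`). -/
theorem log_KZ_associator
    (G₀ G₁ : ℝ → Fhat ℝ 2)
    (hG₀ : ∀ z ∈ Set.Ioo (0 : ℝ) 1, ∀ w : List (Fin 2),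
      HasDerivAt (fun t => G₀ t w) (mulF (kzA z) (G₀ z) w) z)
    (hG₁ : ∀ z ∈ Set.Ioo (0 : ℝ) 1, ∀ w : List (Fin 2),
      HasDerivAt (fun t => G₁ t w) (mulF (kzA z) (G₁ z) w) z)
    (hG₀asym : ∀ w : List (Fin 2),
      Tendsto (fun z => mulF (G₀ z) (expF ((-Real.log z) • delta [(0 : Fin 2)])) w)
        (nhdsWithin 0 (Set.Ioo (0 : ℝ) 1)) (nhds (oneF w)))
    (hG₁asym : ∀ w : List (Fin 2),
      Tendsto (fun z => mulF (G₁ z) (expF ((-Real.log (1 - z)) • delta [(1 : Fin 2)])) w)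
        (nhdsWithin 1 (Set.Ioo (0 : ℝ) 1)) (nhds (oneF w)))
    (Φ : Fhat ℝ 2)
    (hΦ : ∀ z ∈ Set.Ioo (0 : ℝ) 1, mulF (G₁ z) Φ = G₀ z) :
    ∀ v : List (Fin 2),
      logF Φ v =
        ∑' m : ℕ, ∑ a : Fin (m + 1) → Fin 2, ∑ i : Fin (m + 1) → Fin 2,
          if a 0 = 1 ∧ a (Fin.last m) = 0 then
            omegaMZV a * Ccoef a i *
              CBHword (List.ofFn fun j => i (Fin.rev j)) v
          else 0 := by
  intro v
  have hE₀ (z : ℝ) : IsShuffleChar (expF ((-Real.log z) • delta [(0 : Fin 2)])) :=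
    expF_smul_delta_isShuffleChar _ _
  have hE₁ (z : ℝ) : IsShuffleChar (expF ((-Real.log (1 - z)) • delta [(1 : Fin 2)])) :=
    expF_smul_delta_isShuffleChar _ _
  have hnil₀ := SolvesKZ.apply_nil hG₀ hE₀ hG₀asym
  have hnil₁ := SolvesKZ.apply_nil hG₁ hE₁ hG₁asym
  have hmem : (1 / 2 : ℝ) ∈ Set.Ioo (0 : ℝ) 1 := by norm_num
  have hchar : IsShuffleChar Φ :=
    isShuffleChar_of_mulF_left (SolvesKZ.isShuffleChar hG₁ hE₁ hG₁asym _ hmem)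
      (hΦ _ hmem ▸ SolvesKZ.isShuffleChar hG₀ hE₀ hG₀asym _ hmem)
  have hω {m : ℕ} (a : Fin (m + 1) → Fin 2) (ha : a 0 = 1) (hl : a (Fin.last m) = 0) :
      omegaMZV a = Φ (revWord a) :=
    omegaMZV_eq_associator hnil₀ hG₀ hG₀asym (tendsto_associator hnil₁ hG₁ hG₁asym hΦ) a ha hl
  have hterm (m : ℕ) := sum_CBHword_eq hchar
    (associator_zero hnil₀ hnil₁ hG₀ hG₁ hG₀asym hG₁asym hΦ)
    (associator_one hnil₀ hnil₁ hG₀ hG₁ hG₀asym hG₁asym hΦ) hω m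
    (fun w => CBHword w v)
  simp only [hterm]
  rw [logF_eq_cbhHat hchar]
  have hzero (m : ℕ) (hm : v.length ≠ m + 1) :
      ∑ c : Fin (m + 1) → Fin 2, Φ (List.ofFn c) * CBHword (List.ofFn c) v = 0 :=
    Finset.sum_eq_zero fun c _ => by
      rw [CBHword_eq_zero_of_length_ne (by simpa using hm), mul_zero]
  rcases v with _ | ⟨b, v⟩
  · simp only [hzero _ (by simp : ([] : List (Fin 2)).length ≠ _), tsum_zero]
    simp [← logF_eq_cbhHat hchar, logF]
  · rw [tsum_eq_single v.length fun m hm => hzero m (by simpa using hm.symm)]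
    rfl

end CBHPaper
end
end
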